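/- arXiv:2205.09547 — 16 statements merged into one kernel-verified Lean document; each statement's English description precedes it below -/
import Mathlib

section
/- Let 1 ≤ n ≤ 4 and let w be a nonzero valid chipsplitting outcome whose positive support supp⁺(w) has exactly n + 1 elements. Then deg(w) ≤ 2n − 1, i.e., every (i,j) ∈ supp(w) satisfies i + j ≤ 2n − 1. -/
/-- The splitting-move vector at a grid point `p = (i,j)`:
`δ_{(i+1,j)} + δ_{(i,j+1)} − δ_{(i,j)}`. -/
noncomputable def splitMove (p : ℕ × ℕ) : (ℕ × ℕ) →₀ ℤ :=
  Finsupp.single (p.1 + 1, p.2) 1 + Finsupp.single (p.1, p.2 + 1) 1 - Finsupp.single p 1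

/-- A chip configuration is a chipsplitting outcome if it lies in the additive subgroup
generated by all splitting-move vectors. -/
def IsOutcome (w : (ℕ × ℕ) →₀ ℤ) : Prop :=
  w ∈ AddSubgroup.closure (Set.range splitMove)

/-- A chip configuration is valid if its negative support is contained in `{(0,0)}`. -/
def IsValid (w : (ℕ × ℕ) →₀ ℤ) : Prop :=
  ∀ p : ℕ × ℕ, w p < 0 → p = (0, 0)

/-- A `±1` value. -/
def IsSgn (x : ℤ) : Prop := x = 1 ∨ x = -1

/-- Sum of products of adjacent entries in row `m`. -/
def rowH (t : ℕ → ℕ → ℤ) (m : ℕ) : ℤ := ∑ i ∈ Finset.range m, t m i * t m (i + 1)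

lemma interior_count (t : ℕ → ℕ → ℤ) (ht : ∀ m i, t m i = 1 ∨ t m i = -1) (m : ℕ)
    (h0 : t m 0 = 1) (h0' : t (m + 1) 0 = 1) (h1 : t m m = 1) (h1' : t (m + 1) (m + 1) = 1) :
    1 + rowH t m - rowH t (m + 1) ≤
      4 * (((Finset.range m).filter
        (fun i => t m i = t m (i + 1) ∧ t (m + 1) (i + 1) = - t m i)).card : ℤ) := by
  have e1 : 4 * (((Finset.range m).filter
        (fun i => t m i = t m (i + 1) ∧ t (m + 1) (i + 1) = - t m i)).card : ℤ)
      = ∑ i ∈ Finset.range m, (1 + t m i * t m (i + 1) - t m i * t (m + 1) (i + 1)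
          - t m (i + 1) * t (m + 1) (i + 1)) := by
    rw [Finset.card_filter]
    push_cast
    rw [Finset.mul_sum]
    apply Finset.sum_congr rfl
    intro i _
    rcases ht m i with a | a <;> rcases ht m (i + 1) with b | b <;>
      rcases ht (m + 1) (i + 1) with c | c <;> simp [a, b, c]
  have e2 : 0 ≤ ∑ i ∈ Finset.range (m + 1), (1 + t (m + 1) i * t (m + 1) (i + 1)
      - t m i * t (m + 1) i - t m i * t (m + 1) (i + 1)) := by
    apply Finset.sum_nonneg
    intro i _
    rcases ht m i with a | a <;> rcases ht (m + 1) i with b | b <;>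
      rcases ht (m + 1) (i + 1) with c | c <;> simp [a, b, c]
  have e3 : ∑ i ∈ Finset.range (m + 1), t m i * t (m + 1) i
      = ∑ i ∈ Finset.range m, t m (i + 1) * t (m + 1) (i + 1) + 1 := by
    rw [Finset.sum_range_succ', h0, h0']; simp
  have e4 : ∑ i ∈ Finset.range (m + 1), t m i * t (m + 1) (i + 1)
      = ∑ i ∈ Finset.range m, t m i * t (m + 1) (i + 1) + 1 := by
    rw [Finset.sum_range_succ, h1, h1']; simp
  rw [e1]
  simp only [Finset.sum_add_distrib, Finset.sum_sub_distrib] at e2 ⊢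
  rw [e3, e4] at e2
  simp only [rowH]
  simp at e2 ⊢
  linarith

lemma top_count (t : ℕ → ℕ → ℤ) (ht : ∀ m i, t m i = 1 ∨ t m i = -1) (m : ℕ) :
    rowH t m + m = 2 * (((Finset.range m).filter (fun i => t m i = t m (i + 1))).card : ℤ) := by
  rw [Finset.card_filter]
  push_cast
  rw [Finset.mul_sum, rowH]
  have : (m : ℤ) = ∑ i ∈ Finset.range m, 1 := by simp
  rw [this, ← Finset.sum_add_distrib]
  apply Finset.sum_congr rfl
  intro i _
  rcases ht m i with a | a <;> rcases ht m (i + 1) with b | b <;> simp [a, b]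

lemma total_count (t : ℕ → ℕ → ℤ) (ht : ∀ m i, t m i = 1 ∨ t m i = -1) (D : ℕ)
    (h0 : ∀ m, m ≤ D → t m 0 = 1) (h1 : ∀ m, m ≤ D → t m m = 1) :
    ∃ S : Finset (Σ _ : ℕ, ℕ), D ≤ 2 * S.card ∧ ∀ x ∈ S, x.1 ≤ D ∧ x.2 < x.1 ∧
      t x.1 x.2 = t x.1 (x.2 + 1) ∧ (x.1 < D → t (x.1 + 1) (x.2 + 1) = - t x.1 x.2) := by
  classical
  refine ⟨(Finset.range (D + 1)).sigma (fun m => (Finset.range m).filter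
    (fun i => t m i = t m (i + 1) ∧ (m < D → t (m + 1) (i + 1) = - t m i))), ?_, ?_⟩
  · rw [Finset.card_sigma, Finset.sum_range_succ]
    have hint : ∀ k, k ≤ D → (k : ℤ) + rowH t 0 - rowH t k ≤
        4 * ((∑ m ∈ Finset.range k, ((Finset.range m).filter
      (fun i => t m i = t m (i + 1) ∧ (m < D → t (m + 1) (i + 1) = - t m i))).card : ℕ) : ℤ) := by
      intro k
      induction k with
      | zero => intro _; simp
      | succ k ih =>
        intro hk
        have := ih (by omega)
        have h2 := interior_count t ht k (h0 k (by omega)) (h0 _ hk) (h1 k (by omega)) (h1 _ hk)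
        rw [Finset.sum_range_succ]
        have hkD : k < D := by omega
        simp only [hkD, true_imp_iff] at this ⊢
        push_cast at this ⊢
        linarith
    have h2 := top_count t ht D
    have h3 := hint D le_rfl
    have h4 : rowH t 0 = 0 := by simp [rowH]
    simp only [lt_irrefl, false_imp_iff, and_true]
    omega
  · intro x hx
    simp only [Finset.mem_sigma, Finset.mem_range, Finset.mem_filter] at hx
    exact ⟨by omega, hx.2.1, hx.2.2⟩

lemma exists_path (q : ℕ → ℕ → ℤ)
    (hback0 : ∀ m, 0 < q (m + 1) 0 → 0 < q m 0)
    (hback : ∀ m i, 0 < q (m + 1) (i + 1) → 0 < q m i ∨ 0 < q m (i + 1)) :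
    ∀ m i, 0 < q m i → ∃ a : ℕ → ℕ, a m = i ∧ (∀ k ≤ m, 0 < q k (a k)) ∧
      ∀ k < m, a (k + 1) = a k ∨ a (k + 1) = a k + 1 := by
  intro m
  induction m with
  | zero =>
    intro i hi
    refine ⟨fun _ => i, rfl, ?_, by simp⟩
    intro k hk
    obtain rfl : k = 0 := by omega
    exact hi
  | succ m ih =>
    intro i hi
    have : ∃ j, 0 < q m j ∧ (i = j ∨ i = j + 1) := by
      cases i with
      | zero => exact ⟨0, hback0 m hi, Or.inl rfl⟩
      | succ i =>
        rcases hback m i hi with h | h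
        · exact ⟨i, h, Or.inr rfl⟩
        · exact ⟨i + 1, h, Or.inl rfl⟩
    obtain ⟨j, hj, hij⟩ := this
    obtain ⟨a, ha, hp, hs⟩ := ih j hj
    refine ⟨fun k => if k ≤ m then a k else i, by simp, ?_, ?_⟩
    · intro k hk
      by_cases h : k ≤ m
      · simp only [h, if_true]; exact hp k h
      · obtain rfl : k = m + 1 := by omega
        simpa using hi
    · intro k hk
      by_cases h : k < m
      · have h1 : k ≤ m := by omega
        have h2 : k + 1 ≤ m := by omega
        simp only [h1, h2, if_true]; exact hs k h
      · obtain rfl : k = m := by omega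
        simp only [le_refl, if_true]
        rw [if_neg (by omega), ha]
        exact hij

/-- Sign of `q`, with zeros filled in according to the side of the path `a`. -/
noncomputable def fillSign (q : ℕ → ℕ → ℤ) (a : ℕ → ℕ) (m i : ℕ) : ℤ :=
  if 0 < q m i then 1 else if q m i < 0 then -1 else
    if i < a m then (-1) ^ i else (-1) ^ (m + i)

lemma fillSign_sgn (q : ℕ → ℕ → ℤ) (a : ℕ → ℕ) (m i : ℕ) :
    fillSign q a m i = 1 ∨ fillSign q a m i = -1 := by
  unfold fillSign
  split_ifs
  · simp
  · simp
  · exact neg_one_pow_eq_or ℤ _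
  · exact neg_one_pow_eq_or ℤ _

lemma fillSign_one (q : ℕ → ℕ → ℤ) (a : ℕ → ℕ) (m i : ℕ) (h : fillSign q a m i = 1) :
    0 ≤ q m i := by
  unfold fillSign at h
  split_ifs at h <;> omega

lemma fillSign_neg (q : ℕ → ℕ → ℤ) (a : ℕ → ℕ) (m i : ℕ) (h : fillSign q a m i = -1) :
    q m i ≤ 0 := by
  unfold fillSign at h
  split_ifs at h <;> omega

lemma fillSign_left (q : ℕ → ℕ → ℤ) (a : ℕ → ℕ) (m i : ℕ) (h : q m i = 0) (hi : i < a m) :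
    fillSign q a m i = (-1) ^ i := by simp [fillSign, h, hi]

lemma fillSign_right (q : ℕ → ℕ → ℤ) (a : ℕ → ℕ) (m i : ℕ) (h : q m i = 0) (hi : ¬ i < a m) :
    fillSign q a m i = (-1) ^ (m + i) := by simp [fillSign, h, hi]

lemma core (q W : ℕ → ℕ → ℤ) (D : ℕ) (h0 : ∀ m i, m < i → q m i = 0)
    (hD : ∀ m i, D < m → q m i = 0) (htop : ∃ i, q D i ≠ 0)
    (hw : ∀ m i, W (m + 1) (i + 1) = q m i + q m (i + 1) - q (m + 1) (i + 1))
    (hw0 : ∀ m, W (m + 1) 0 = q m 0 - q (m + 1) 0)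
    (hpos : ∀ m i, 0 ≤ W (m + 1) i) :
    ∃ b a, W (b + 1) 0 ≠ 0 ∧ W (a + 1) (a + 1) ≠ 0 ∧
      ∃ S : Finset (Σ _ : ℕ, ℕ), D ≤ 2 * S.card ∧
        ∀ x ∈ S, x.2 < x.1 ∧ W (x.1 + 1) (x.2 + 1) ≠ 0 := by
  have hw1 : ∀ m, W (m + 1) (m + 1) = q m m - q (m + 1) (m + 1) := by
    intro m; rw [hw, h0 m (m + 1) (by omega)]; ring
  -- a positive entry in the top row
  have htp : ∃ i, 0 < q D i := by
    by_contra! hcon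
    obtain ⟨i, hi⟩ := htop
    apply hi
    clear hi
    induction i with
    | zero =>
      have := hpos D 0
      rw [hw0, hD (D + 1) 0 (by omega)] at this
      have := hcon 0
      omega
    | succ i ih =>
      have := hpos D (i + 1)
      rw [hw, hD (D + 1) _ (by omega)] at this
      have := hcon (i + 1)
      omega
  obtain ⟨i0, hi0⟩ := htp
  obtain ⟨a, -, hap, has⟩ := exists_path q
    (fun m h => by have := hpos m 0; rw [hw0] at this; omega)
    (fun m i h => by have := hpos m (i + 1); rw [hw] at this; omega) D i0 hi0
  have ha0 : a 0 = 0 := by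
    by_contra h
    have := hap 0 (by omega)
    rw [h0 0 (a 0) (by omega)] at this
    omega
  have hq00 : 0 < q 0 0 := by have := hap 0 (by omega); rwa [ha0] at this
  have ham : ∀ m ≤ D, a m ≤ m := by
    intro m hm
    by_contra h
    have := hap m hm
    rw [h0 m (a m) (by omega)] at this
    omega
  -- nonnegativity on the two sides
  have hcol : ∀ m, 0 ≤ q m 0 := by
    have : ∀ k m, D < m + k → 0 ≤ q m 0 := by
      intro k
      induction k with
      | zero => intro m hm; rw [hD m 0 (by omega)]
      | succ k ih =>
        intro m hm
        have h1 := ih (m + 1) (by omega)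
        have h2 := hpos m 0
        rw [hw0] at h2
        omega
    intro m
    exact this (D + 1) m (by omega)
  have hrow : ∀ m, 0 ≤ q m m := by
    have : ∀ k m, D < m + k → 0 ≤ q m m := by
      intro k
      induction k with
      | zero => intro m hm; rw [hD m m (by omega)]
      | succ k ih =>
        intro m hm
        have h1 := ih (m + 1) (by omega)
        have h2 := hpos m (m + 1)
        rw [hw1] at h2
        omega
    intro m
    exact this (D + 1) m (by omega)
  have hb : ∃ b, W (b + 1) 0 ≠ 0 := by
    by_contra! hcon
    have : ∀ m, q m 0 = q 0 0 := by
      intro m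
      induction m with
      | zero => rfl
      | succ m ih => have := hcon m; rw [hw0] at this; omega
    have h1 := this (D + 1)
    rw [hD (D + 1) 0 (by omega)] at h1
    omega
  have hc : ∃ b, W (b + 1) (b + 1) ≠ 0 := by
    by_contra! hcon
    have : ∀ m, q m m = q 0 0 := by
      intro m
      induction m with
      | zero => rfl
      | succ m ih => have := hcon m; rw [hw1] at this; omega
    have h1 := this (D + 1)
    rw [hD (D + 1) _ (by omega)] at h1
    omega
  obtain ⟨b, hb⟩ := hb
  obtain ⟨c, hc⟩ := hc
  refine ⟨b, c, hb, hc, ?_⟩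
  have ht := fillSign_sgn q a
  obtain ⟨S, hS, hS'⟩ := total_count (fillSign q a) ht D
    (by
      intro m hm
      by_cases h : q m 0 = 0
      · by_cases h' : 0 < a m
        · rw [fillSign_left q a m 0 h h']; simp
        · exfalso
          have := hap m hm
          rw [show a m = 0 by omega] at this
          omega
      · have := hcol m
        have : 0 < q m 0 := by omega
        simp [fillSign, this])
    (by
      intro m hm
      by_cases h : q m m = 0
      · have := ham m hm
        rw [fillSign_right q a m m h (by omega)]
        exact Even.neg_one_pow ⟨m, rfl⟩
      · have := hrow m
        have : 0 < q m m := by omega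
        simp [fillSign, this])
  refine ⟨S, hS, ?_⟩
  rintro ⟨m, i⟩ hx
  obtain ⟨hmD, him, e1, e2⟩ := hS' _ hx
  simp only at hmD him e1 e2 ⊢
  refine ⟨him, ?_⟩
  intro hW
  rw [hw] at hW
  have hzero : q m i = 0 ∧ q m (i + 1) = 0 ∧ q (m + 1) (i + 1) = 0 := by
    have hthird : (fillSign q a m i = 1 → q (m + 1) (i + 1) ≤ 0) ∧
        (fillSign q a m i = -1 → 0 ≤ q (m + 1) (i + 1)) := by
      by_cases h : m < D
      · constructor
        · intro h'; exact fillSign_neg q a _ _ (by rw [e2 h, h'])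
        · intro h'; exact fillSign_one q a _ _ (by rw [e2 h, h']; simp)
      · rw [hD (m + 1) _ (by omega)]; simp
    rcases ht m i with h | h
    · have h1 := fillSign_one q a _ _ h
      have h2 := fillSign_one q a m (i + 1) (by rw [← e1, h])
      have h3 := hthird.1 h
      omega
    · have h1 := fillSign_neg q a _ _ h
      have h2 := fillSign_neg q a m (i + 1) (by rw [← e1, h])
      have h3 := hthird.2 h
      omega
  obtain ⟨z1, z2, -⟩ := hzero
  have hne1 : a m ≠ i := by
    intro h; have := hap m hmD; rw [h] at this; omega
  have hne2 : a m ≠ i + 1 := by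
    intro h; have := hap m hmD; rw [h] at this; omega
  by_cases h : i < a m
  · rw [fillSign_left q a m i z1 h, fillSign_left q a m (i + 1) z2 (by omega), pow_succ] at e1
    rcases neg_one_pow_eq_or ℤ i with h' | h' <;> rw [h'] at e1 <;> norm_num at e1
  · rw [fillSign_right q a m i z1 h, fillSign_right q a m (i + 1) z2 (by omega),
      ← add_assoc, pow_succ] at e1
    rcases neg_one_pow_eq_or ℤ (m + i) with h' | h' <;> rw [h'] at e1 <;> norm_num at e1

lemma outcome_quot (w : (ℕ × ℕ) →₀ ℤ) (hw : IsOutcome w) :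
    ∃ Q : (ℕ × ℕ) →₀ ℤ, (∀ i j, w (i + 1, j + 1) = Q (i, j + 1) + Q (i + 1, j) - Q (i + 1, j + 1)) ∧
      (∀ i, w (i + 1, 0) = Q (i, 0) - Q (i + 1, 0)) ∧
      (∀ j, w (0, j + 1) = Q (0, j) - Q (0, j + 1)) ∧ w (0, 0) = - Q (0, 0) := by
  unfold IsOutcome at hw
  induction hw using AddSubgroup.closure_induction with
  | mem x hx =>
    obtain ⟨⟨a, b⟩, rfl⟩ := hx
    refine ⟨Finsupp.single (a, b) 1, ?_, ?_, ?_, ?_⟩ <;> intros <;>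
      simp only [splitMove, Finsupp.sub_apply, Finsupp.add_apply, Finsupp.single_apply,
        Prod.mk.injEq] <;> grind
  | zero => exact ⟨0, by simp⟩
  | add x y _ _ hx hy =>
    obtain ⟨P, p1, p2, p3, p4⟩ := hx
    obtain ⟨R, r1, r2, r3, r4⟩ := hy
    refine ⟨P + R, ?_, ?_, ?_, ?_⟩ <;> intros <;> simp only [Finsupp.add_apply, *] <;> ring
  | neg x _ hx =>
    obtain ⟨P, p1, p2, p3, p4⟩ := hx
    refine ⟨-P, ?_, ?_, ?_, ?_⟩ <;> intros <;> simp only [Finsupp.neg_apply, *] <;> ring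

theorem stmt_0 (n : ℕ) (hn1 : 1 ≤ n) (hn4 : n ≤ 4)
    (w : (ℕ × ℕ) →₀ ℤ) (hw : IsOutcome w) (hv : IsValid w) (hne : w ≠ 0)
    (hcard : {p : ℕ × ℕ | 0 < w p}.ncard = n + 1) :
    ∀ p : ℕ × ℕ, w p ≠ 0 → p.1 + p.2 ≤ 2 * n - 1 := by
  classical
  obtain ⟨Q, Q1, Q2, Q3, Q4⟩ := outcome_quot w hw
  have hQ : Q ≠ 0 := by
    rintro rfl
    apply hne
    ext ⟨i, j⟩
    cases i <;> cases j <;> simp [Q1, Q2, Q3, Q4]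
  have hsup : Q.support.Nonempty := Finsupp.support_nonempty_iff.mpr hQ
  obtain ⟨⟨x0, y0⟩, hmem, hmax⟩ := Q.support.exists_max_image (fun p => p.1 + p.2) hsup
  obtain ⟨D, hDdef⟩ : ∃ D, D = x0 + y0 := ⟨_, rfl⟩
  have hbig : ∀ i j, D < i + j → Q (i, j) = 0 := by
    intro i j hij
    by_contra h
    have := hmax (i, j) (Finsupp.mem_support_iff.mpr h)
    simp only at this
    omega
  have hvp : ∀ p, p ≠ (0, 0) → 0 ≤ w p := by
    intro p hp
    by_contra h
    exact hp (hv p (by omega))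
  obtain ⟨b, a, hb, ha, S, hS, hS'⟩ := core
    (fun m i => if i ≤ m then Q (i, m - i) else 0)
    (fun m i => if i ≤ m then w (i, m - i) else 0) D
    (by intro m i h; simp; omega)
    (by
      intro m i h
      split_ifs
      · exact hbig _ _ (by omega)
      · rfl)
    ⟨x0, by
      rw [if_pos (by omega), show D - x0 = y0 by omega]
      exact Finsupp.mem_support_iff.mp hmem⟩
    (by
      intro m i
      rcases lt_trichotomy i m with h | h | h
      · obtain ⟨k, rfl⟩ : ∃ k, m = i + 1 + k := ⟨m - i - 1, by omega⟩
        rw [if_pos (by omega), if_pos (by omega), if_pos (by omega), if_pos (by omega),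
          show i + 1 + k + 1 - (i + 1) = k + 1 by omega, show i + 1 + k - i = k + 1 by omega,
          show i + 1 + k - (i + 1) = k by omega]
        exact Q1 i k
      · subst h
        simp [Q2]
      · rw [if_neg (by omega), if_neg (by omega), if_neg (by omega), if_neg (by omega)]; rfl)
    (by intro m; simp [Q3])
    (by
      intro m i
      split_ifs with h
      · apply hvp
        simp only [ne_eq, Prod.mk.injEq]
        omega
      · rfl)
  -- the counting
  have hpos : ∀ p, p ≠ (0, 0) → w p ≠ 0 → 0 < w p := by
    intro p hp h
    have := hvp p hp
    omega
  simp only [Nat.zero_le, if_true, le_refl, Nat.sub_zero, Nat.sub_self] at hb ha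
  let f : (Σ _ : ℕ, ℕ) → ℕ × ℕ := fun x => (x.2 + 1, x.1 - x.2)
  let T : Finset (ℕ × ℕ) := insert (0, b + 1) (insert (a + 1, 0) (S.image f))
  have hTc : T.card = S.card + 2 := by
    have h1 : (a + 1, 0) ∉ S.image f := by
      simp only [Finset.mem_image, not_exists, not_and]
      intro x hx h
      have := (hS' x hx).1
      simp only [f, Prod.mk.injEq] at h
      omega
    have h2 : (0, b + 1) ∉ insert (a + 1, 0) (S.image f) := by
      simp [f]
    rw [Finset.card_insert_of_notMem h2, Finset.card_insert_of_notMem h1,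
      Finset.card_image_of_injOn]
    rintro ⟨m, i⟩ hx ⟨m', i'⟩ hy h
    have h3 := (hS' _ hx).1
    have h4 := (hS' _ hy).1
    simp only [f, Prod.mk.injEq] at h h3 h4
    obtain rfl : i = i' := by omega
    obtain rfl : m = m' := by omega
    rfl
  have hTs : (T : Set (ℕ × ℕ)) ⊆ {p : ℕ × ℕ | 0 < w p} := by
    intro p hp
    simp only [T, Finset.coe_insert, Set.mem_insert_iff, Finset.mem_coe, Finset.mem_image] at hp
    rcases hp with rfl | rfl | ⟨x, hx, rfl⟩
    · exact hpos _ (by simp) hb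
    · exact hpos _ (by simp) ha
    · obtain ⟨h1, h2⟩ := hS' x hx
      rw [if_pos (by omega), show x.1 + 1 - (x.2 + 1) = x.1 - x.2 by omega] at h2
      exact hpos _ (by simp [f]) h2
  have hfin : {p : ℕ × ℕ | 0 < w p}.Finite := by
    apply w.support.finite_toSet.subset
    intro p hp
    simp only [Set.mem_ofPred_eq] at hp
    simp only [Finset.mem_coe, Finsupp.mem_support_iff]
    omega
  have hle := Set.ncard_le_ncard hTs hfin
  rw [Set.ncard_coe_finset, hTc, hcard] at hle
  rintro ⟨i, j⟩ hp
  have hdeg : i + j ≤ D + 1 := by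
    by_contra hcon
    apply hp
    cases i with
    | zero =>
      cases j with
      | zero => omega
      | succ j => rw [Q3, hbig _ _ (by omega), hbig _ _ (by omega)]; rfl
    | succ i =>
      cases j with
      | zero => rw [Q2, hbig _ _ (by omega), hbig _ _ (by omega)]; rfl
      | succ j =>
        rw [Q1, hbig _ _ (by omega), hbig _ _ (by omega), hbig _ _ (by omega)]; rfl
  simp only
  omega
end

section
/- Let w be a valid chipsplitting outcome whose positive support supp⁺(w) has exactly 5 elements. Then deg(w) ≤ 7, i.e., every (i,j) ∈ supp(w) satisfies i + j ≤ 7. -/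
/-- `f` is a backward lattice path on the levels `[e, L]`. -/
def StepOn (f : ℕ → ℤ) (e L : ℕ) : Prop :=
  ∀ l, e ≤ l → l < L → f l = f (l + 1) ∨ f l = f (l + 1) - 1

/-- A place where a positive chip count is forced. -/
def NodeAt (Q : ℕ → ℤ → ℤ) (e : ℕ) (x : ℤ) : Prop :=
  ∃ k, e = k + 1 ∧ Q (k + 1) x < Q k (x - 1) + Q k x

lemma noncross (f g : ℕ → ℤ) (e : ℕ) : ∀ n : ℕ, StepOn f e (e + n) → StepOn g e (e + n) →
    (∀ l, e ≤ l → l < e + n → f l ≠ g l) → f (e + n) < g (e + n) → f e < g e := by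
  intro n
  induction n with
  | zero => intro _ _ _ h; simpa using h
  | succ n ih =>
    intro hf hg hne h
    apply ih (fun l h1 h2 => hf l h1 (by omega)) (fun l h1 h2 => hg l h1 (by omega))
      (fun l h1 h2 => hne l h1 (by omega))
    have h1 := hf (e + n) (by omega) (by omega)
    have h2 := hg (e + n) (by omega) (by omega)
    have h3 := hne (e + n) (by omega) (by omega)
    have h4 : e + (n + 1) = e + n + 1 := by omega
    rw [h4] at h
    omega

lemma noncross' (f g : ℕ → ℤ) (e L : ℕ) (heL : e ≤ L) (hf : StepOn f e L) (hg : StepOn g e L)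
    (hne : ∀ l, e ≤ l → l < L → f l ≠ g l) (h : f L < g L) : f e < g e := by
  obtain ⟨n, rfl⟩ := Nat.exists_eq_add_of_le heL
  exact noncross f g e n hf hg hne h

lemma posPath (Q : ℕ → ℤ → ℤ) (hQ : ∀ k i, Q (k + 1) i ≤ Q k (i - 1) + Q k i) :
    ∀ k i, 0 < Q k i → ∃ g : ℕ → ℤ, g k = i ∧ StepOn g 0 k ∧ ∀ l, l ≤ k → 0 < Q l (g l) := by
  intro k
  induction k with
  | zero =>
    intro i hi
    refine ⟨fun _ => i, rfl, fun l _ h => by omega, fun l hl => ?_⟩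
    obtain rfl : l = 0 := by omega
    exact hi
  | succ k ih =>
    intro i hi
    have h := hQ k i
    have : ∃ j, (j = i ∨ j = i - 1) ∧ 0 < Q k j := by
      by_cases h1 : 0 < Q k i
      · exact ⟨i, Or.inl rfl, h1⟩
      · exact ⟨i - 1, Or.inr rfl, by omega⟩
    obtain ⟨j, hj, hjp⟩ := this
    obtain ⟨g, hg1, hg2, hg3⟩ := ih j hjp
    refine ⟨fun l => if l ≤ k then g l else i, by simp, ?_, ?_⟩
    · intro l _ hl
      by_cases hlk : l = k
      · subst hlk
        simpa [hg1] using hj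
      · have := hg2 l (by omega) (by omega)
        simpa [show l ≤ k by omega, show l + 1 ≤ k by omega] using this
    · intro l hl
      by_cases hlk : l ≤ k
      · simpa [hlk] using hg3 l hlk
      · obtain rfl : l = k + 1 := by omega
        simpa using hi

lemma negPath (Q : ℕ → ℤ → ℤ) (h0 : ∀ i, 0 ≤ Q 0 i) :
    ∀ k i, Q k i < 0 → ∃ (f : ℕ → ℤ) (e : ℕ), e ≤ k ∧ f k = i ∧ StepOn f e k ∧
      (∀ l, e ≤ l → l ≤ k → Q l (f l) < 0) ∧ NodeAt Q e (f e) := by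
  intro k
  induction k with
  | zero => intro i hi; have := h0 i; omega
  | succ k ih =>
    intro i hi
    by_cases hh : ∃ j, (j = i ∨ j = i - 1) ∧ Q k j < 0
    · obtain ⟨j, hj, hjp⟩ := hh
      obtain ⟨g, e, he, hg1, hg2, hg3, hg4⟩ := ih j hjp
      refine ⟨fun l => if l ≤ k then g l else i, e, by omega, by simp, ?_, ?_, ?_⟩
      · intro l hel hl
        by_cases hlk : l = k
        · subst hlk
          simpa [hg1] using hj
        · have := hg2 l hel (by omega)
          simpa [show l ≤ k by omega, show l + 1 ≤ k by omega] using this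
      · intro l hel hl
        by_cases hlk : l ≤ k
        · simpa [hlk] using hg3 l hel hlk
        · obtain rfl : l = k + 1 := by omega
          simpa using hi
      · simpa [he] using hg4
    · push Not at hh
      have h1 := hh i (Or.inl rfl)
      have h2 := hh (i - 1) (Or.inr rfl)
      refine ⟨fun _ => i, k + 1, le_rfl, rfl, fun l _ _ => by omega, ?_, k, rfl,
        by show Q (k + 1) i < Q k (i - 1) + Q k i; omega⟩
      intro l hl1 hl2
      obtain rfl : l = k + 1 := by omega
      exact hi

/-- Data of a traced path: zeros on the levels `[t, L]`, negative on `[e, t)`, ending in a node. -/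
structure Traced (Q : ℕ → ℤ → ℤ) (L : ℕ) (s σ : ℤ) (f : ℕ → ℤ) (e t : ℕ) (b : Bool) : Prop where
  et : e ≤ t
  tL : t ≤ L
  step : StepOn f e L
  zero : ∀ l, t ≤ l → l ≤ L → Q l (f l) = 0
  form : ∀ l, t ≤ l → l ≤ L → f l = s - σ * ((L : ℤ) - l)
  neg : ∀ l, e ≤ l → l < t → Q l (f l) < 0
  node : NodeAt Q e (f e)
  tagE : e = t → b = false
  tagF : e < t → b = false → f (t - 1) = f t ∧ 0 < Q (t - 1) (f t - 1)
  tagT : e < t → b = true → f (t - 1) = f t - 1 ∧ 0 < Q (t - 1) (f t)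

lemma Traced.start {Q : ℕ → ℤ → ℤ} {L : ℕ} {s σ : ℤ} {f : ℕ → ℤ} {e t : ℕ} {b : Bool}
    (T : Traced Q L s σ f e t b) : f L = s := by
  have := T.form L T.tL le_rfl
  simpa using this

lemma Traced.nonpos {Q : ℕ → ℤ → ℤ} {L : ℕ} {s σ : ℤ} {f : ℕ → ℤ} {e t : ℕ} {b : Bool}
    (T : Traced Q L s σ f e t b) (l : ℕ) (h1 : e ≤ l) (h2 : l ≤ L) : Q l (f l) ≤ 0 := by
  by_cases h : l < t
  · exact (T.neg l h1 h).le
  · exact (T.zero l (by omega) h2).le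

lemma tracedExists (Q : ℕ → ℤ → ℤ) (hQ : ∀ k i, Q (k + 1) i ≤ Q k (i - 1) + Q k i)
    (h0 : ∀ i, 0 ≤ Q 0 i) (h00 : ∀ i, 0 < Q 0 i → i = 0) (σ : ℤ) (g : ℕ → ℤ) :
    ∀ k i, Q (k + 1) i = 0 → StepOn g 0 (k + 1) → (∀ l, l ≤ k → 0 < Q l (g l)) →
      ((σ = 0 ∧ 0 ≤ i ∧ i < g (k + 1)) ∨ (σ = 1 ∧ i ≤ k + 1 ∧ g (k + 1) < i)) →
      ∃ f e t b, Traced Q (k + 1) i σ f e t b := by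
  -- a negative predecessor next to a positive one
  have turn : ∀ k i j b, Q (k + 1) i = 0 → Q k j < 0 →
      (b = false → j = i ∧ 0 < Q k (i - 1)) → (b = true → j = i - 1 ∧ 0 < Q k i) →
      ∃ f e t b, Traced Q (k + 1) i σ f e t b := by
    intro k i j b hi hj hF hT
    obtain ⟨f, e, he, hf1, hf2, hf3, hf4⟩ := negPath Q h0 k j hj
    refine ⟨fun l => if l ≤ k then f l else i, e, k + 1, b, by omega, le_rfl, ?_, ?_, ?_, ?_, ?_,
      fun h => by omega, ?_, ?_⟩
    · intro l hel hl
      by_cases hlk : l = k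
      · subst hlk
        cases b with
        | false => simp [hf1, (hF rfl).1]
        | true => simp [hf1, (hT rfl).1]
      · have := hf2 l hel (by omega)
        simpa [show l ≤ k by omega, show l + 1 ≤ k by omega] using this
    · intro l h1 h2
      obtain rfl : l = k + 1 := by omega
      simpa using hi
    · intro l h1 h2
      obtain rfl : l = k + 1 := by omega
      simp
    · intro l h1 h2
      simpa [show l ≤ k by omega] using hf3 l h1 (by omega)
    · simpa [he] using hf4
    · intro _ hb
      simpa [hf1] using hF hb
    · intro _ hb
      simpa [hf1] using hT hb
  intro k
  induction k with
  | zero =>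
    intro i hi hg hpos hinv
    have hg0 := h00 _ (hpos 0 le_rfl)
    have hst := hg 0 le_rfl (by omega)
    have hQi := hQ 0 i
    have h1 := h0 i
    have h2 := h0 (i - 1)
    have hp := hpos 0 le_rfl
    rw [hg0] at hp
    have : i = 0 ∨ i - 1 = 0 := by
      push_cast at hinv
      simp only [zero_add] at *
      omega
    refine ⟨fun _ => i, 1, 1, false, le_rfl, le_rfl, fun l _ _ => by omega, ?_, ?_,
      fun l _ _ => by omega, ⟨0, rfl, ?_⟩, fun _ => rfl, fun h => by omega, fun h => by omega⟩
    · intro l h3 h4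
      obtain rfl : l = 1 := by omega
      simpa using hi
    · intro l h3 h4
      obtain rfl : l = 1 := by omega
      simp
    · rcases this with h | h
      · rw [hi]; rw [h] at h2 ⊢; omega
      · rw [hi]; rw [h]; omega
  | succ k ih =>
    intro i hi hg hpos hinv
    have hQi := hQ (k + 1) i
    by_cases c1 : Q (k + 1) i < 0
    · exact turn (k + 1) i i false hi c1 (fun _ => ⟨rfl, by omega⟩) (fun h => by simp at h)
    by_cases c2 : Q (k + 1) (i - 1) < 0
    · exact turn (k + 1) i (i - 1) true hi c2 (fun h => by simp at h) (fun _ => ⟨rfl, by omega⟩)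
    by_cases c3 : Q (k + 1) i = 0 ∧ Q (k + 1) (i - 1) = 0
    · -- move on through the zeros
      have hst := hg (k + 1) (by omega) (by omega)
      have hp := hpos (k + 1) le_rfl
      have n1 : i ≠ g (k + 1) := by intro h; rw [← h] at hp; omega
      have n2 : i - 1 ≠ g (k + 1) := by intro h; rw [← h] at hp; omega
      have hσ : σ = 0 ∨ σ = 1 := by tauto
      have hz : Q (k + 1) (i - σ) = 0 := by
        rcases hσ with h | h
        · rw [h, sub_zero]; exact c3.1
        · rw [h]; exact c3.2
      obtain ⟨f, e, t, b, T⟩ := ih (i - σ) hz (fun l h1 h2 => hg l h1 (by omega))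
        (fun l hl => hpos l (by omega)) (by push_cast at hinv; omega)
      have hs := T.start
      have htL := T.tL
      have het := T.et
      refine ⟨fun l => if l ≤ k + 1 then f l else i, e, t, b, T.et, by omega, ?_, ?_, ?_, ?_, ?_,
        T.tagE, ?_, ?_⟩
      · intro l hel hl
        by_cases hlk : l = k + 1
        · subst hlk
          simp only [le_refl, if_true, hs]
          rw [if_neg (by omega)]
          omega
        · have := T.step l hel (by omega)
          simpa [show l ≤ k + 1 by omega, show l ≤ k by omega] using this
      · intro l h1 h2
        by_cases hlk : l ≤ k + 1
        · simpa [hlk] using T.zero l h1 hlk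
        · obtain rfl : l = k + 1 + 1 := by omega
          simpa using hi
      · intro l h1 h2
        by_cases hlk : l ≤ k + 1
        · have := T.form l h1 hlk
          simp only [hlk, if_true, this]
          push_cast
          ring
        · obtain rfl : l = k + 1 + 1 := by omega
          simp
      · intro l h1 h2
        simpa [show l ≤ k + 1 by omega] using T.neg l h1 h2
      · simpa [show e ≤ k + 1 by omega] using T.node
      · intro h hb
        have := T.tagF h hb
        simpa [show t ≤ k + 1 by omega, show t - 1 ≤ k + 1 by omega] using this
      · intro h hb
        have := T.tagT h hb
        simpa [show t ≤ k + 1 by omega, show t - 1 ≤ k + 1 by omega] using this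
    · refine ⟨fun _ => i, k + 2, k + 2, false, le_rfl, le_rfl, fun l _ _ => by omega, ?_, ?_,
        fun l _ _ => by omega, ⟨k + 1, rfl, by omega⟩, fun _ => rfl, fun h => by omega,
        fun h => by omega⟩
      · intro l h3 h4
        obtain rfl : l = k + 1 + 1 := by omega
        simpa using hi
      · intro l h3 h4
        obtain rfl : l = k + 1 + 1 := by omega
        simp

/-- Two traced paths of the same class with the same tag cannot end in the same node. -/
lemma tracedUnique (Q : ℕ → ℤ → ℤ) (hQ : ∀ k i, Q (k + 1) i ≤ Q k (i - 1) + Q k i)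
    {L : ℕ} {s s' σ : ℤ} {f f' : ℕ → ℤ} {e t t' : ℕ} {b : Bool} (hss : s < s')
    (T : Traced Q L s σ f e t b) (T' : Traced Q L s' σ f' e t' b) : f e ≠ f' e := by
  intro hend
  have a1 := T.et
  have a2 := T.tL
  have a1' := T'.et
  have a2' := T'.tL
  by_cases c : e = t
  · by_cases c' : e = t'
    · have h1 := T.form e (by omega) (by omega)
      have h2 := T'.form e (by omega) (by omega)
      omega
    · have h1 := T.zero e (by omega) (by omega)
      have h2 := T'.neg e (by omega) (by omega)
      rw [hend] at h1
      omega
  by_cases c' : e = t'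
  · have h1 := T'.zero e (by omega) (by omega)
    have h2 := T.neg e (by omega) (by omega)
    rw [hend] at h2
    omega
  -- the two paths are ordered as long as one of them is in the zero phase
  have key : ∀ r, e ≤ r → r ≤ L → (t ≤ r ∨ t' ≤ r) → f r < f' r := by
    intro r her hrL hr
    apply noncross' f f' r L hrL (fun l h1 h2 => T.step l (by omega) h2)
      (fun l h1 h2 => T'.step l (by omega) h2)
    · intro l h1 h2 hl
      by_cases d : t ≤ l
      · have z := T.zero l d (by omega)
        by_cases d' : t' ≤ l
        · have h3 := T.form l d (by omega)
          have h4 := T'.form l d' (by omega)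
          omega
        · have := T'.neg l (by omega) (by omega)
          rw [hl] at z
          omega
      · have z := T.neg l (by omega) (by omega)
        have z' := T'.zero l (by omega) (by omega)
        rw [hl] at z
        omega
    · rw [T.start, T'.start]; exact hss
  cases b with
  | false =>
    obtain ⟨u1, u2⟩ := T'.tagF (by omega) rfl
    have k1 := key t' (by omega) a2' (Or.inr le_rfl)
    obtain ⟨g, g1, g2, g3⟩ := posPath Q hQ _ _ u2
    have st := T.step (t' - 1) (by omega) (by omega)
    rw [show t' - 1 + 1 = t' by omega] at st
    have np := T.nonpos (t' - 1) (by omega) (by omega)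
    have n1 : f (t' - 1) ≠ f' t' - 1 := by intro h; rw [h] at np; omega
    have r1 : f e < g e := by
      apply noncross' f g e (t' - 1) (by omega) (fun l h1 h2 => T.step l h1 (by omega))
        (fun l h1 h2 => g2 l (by omega) h2)
      · intro l h1 h2 h
        have p1 := T.nonpos l h1 (by omega)
        have p2 := g3 l (by omega)
        rw [h] at p1
        omega
      · omega
    have r2 : g e < f' e := by
      apply noncross' g f' e (t' - 1) (by omega) (fun l h1 h2 => g2 l (by omega) h2)
        (fun l h1 h2 => T'.step l h1 (by omega))
      · intro l h1 h2 h
        have p1 := T'.nonpos l h1 (by omega)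
        have p2 := g3 l (by omega)
        rw [h] at p2
        omega
      · omega
    omega
  | true =>
    obtain ⟨u1, u2⟩ := T.tagT (by omega) rfl
    have k1 := key t (by omega) a2 (Or.inl le_rfl)
    obtain ⟨g, g1, g2, g3⟩ := posPath Q hQ _ _ u2
    have st := T'.step (t - 1) (by omega) (by omega)
    rw [show t - 1 + 1 = t by omega] at st
    have np := T'.nonpos (t - 1) (by omega) (by omega)
    have n1 : f' (t - 1) ≠ f t := by intro h; rw [h] at np; omega
    have r1 : f e < g e := by
      apply noncross' f g e (t - 1) (by omega) (fun l h1 h2 => T.step l h1 (by omega))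
        (fun l h1 h2 => g2 l (by omega) h2)
      · intro l h1 h2 h
        have p1 := T.nonpos l h1 (by omega)
        have p2 := g3 l (by omega)
        rw [h] at p1
        omega
      · omega
    have r2 : g e < f' e := by
      apply noncross' g f' e (t - 1) (by omega) (fun l h1 h2 => g2 l (by omega) h2)
        (fun l h1 h2 => T'.step l h1 (by omega))
      · intro l h1 h2 h
        have p1 := T'.nonpos l h1 (by omega)
        have p2 := g3 l (by omega)
        rw [h] at p2
        omega
      · omega
    omega

/-- First zero of a nonincreasing sequence which starts positive and reaches zero. -/
lemma firstZero (u : ℕ → ℤ) (m : ℕ) (h0 : 0 < u 0) (hm : u (m + 1) = 0)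
    (hu : ∀ k, u (k + 1) ≤ u k) : ∃ b, u (b + 1) = 0 ∧ 0 < u b := by
  have anti : Antitone u := antitone_nat_of_succ_le hu
  have hex : ∃ n, u n ≤ 0 := ⟨m + 1, hm.le⟩
  classical
  have hs := Nat.find_spec hex
  have hmin : Nat.find hex ≤ m + 1 := Nat.find_min' hex hm.le
  have hne : Nat.find hex ≠ 0 := by intro h; rw [h] at hs; omega
  obtain ⟨b, hb⟩ := Nat.exists_eq_succ_of_ne_zero hne
  refine ⟨b, ?_, ?_⟩
  · rw [hb] at hs hmin
    have := anti hmin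
    rw [hm] at this
    simp only [Nat.succ_eq_add_one] at *
    omega
  · have := Nat.find_min hex (m := b) (by omega)
    omega

/-- The counting theorem. -/
theorem nodeCount (Q : ℕ → ℤ → ℤ) (m : ℕ) (S : Finset (ℕ × ℤ))
    (hQ : ∀ k i, Q (k + 1) i ≤ Q k (i - 1) + Q k i)
    (hout : ∀ (k : ℕ) (i : ℤ), (i < 0 ∨ (k : ℤ) < i) → Q k i = 0)
    (hm : ∀ i, Q (m + 1) i = 0) (hne : ∃ i, Q m i ≠ 0)
    (hS : ∀ e x, NodeAt Q e x → (e, x) ∈ S) : m + 4 ≤ 2 * S.card := by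
  classical
  obtain ⟨c, hc⟩ : ∃ c, 0 < Q m c := by
    obtain ⟨i, hi⟩ := hne
    by_cases h : 0 < Q m i
    · exact ⟨i, h⟩
    · have h1 := hQ m i
      rw [hm] at h1
      exact ⟨i - 1, by omega⟩
  obtain ⟨g, g1, g2, g3⟩ := posPath Q hQ m c hc
  have hg0 : g 0 = 0 := by
    by_contra h
    have := hout 0 (g 0) (by push_cast; omega)
    have := g3 0 (by omega)
    omega
  have h00 : 0 < Q 0 0 := by have := g3 0 (by omega); rwa [hg0] at this
  have h0 : ∀ i, 0 ≤ Q 0 i := by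
    intro i
    by_cases h : i = 0
    · rw [h]; exact h00.le
    · rw [hout 0 i (by push_cast; omega)]
  have h0' : ∀ i, 0 < Q 0 i → i = 0 := by
    intro i hi
    by_contra h
    rw [hout 0 i (by push_cast; omega)] at hi
    omega
  -- the paths
  have hpath : ∀ s : Fin (m + 2), ∃ f e t b,
      Traced Q (m + 1) (s : ℤ) (if (s : ℤ) ≤ c then 0 else 1) f e t b := by
    intro s
    have hs := s.2
    by_cases h : (s : ℤ) ≤ c
    · apply tracedExists Q hQ h0 h0' _ (fun l => if l ≤ m then g l else c + 1) m _ (hm _)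
      · intro l _ hl
        by_cases hl' : l = m
        · subst hl'; simp [g1]
        · have := g2 l (by omega) (by omega)
          simpa [show l ≤ m by omega, show l + 1 ≤ m by omega] using this
      · intro l hl
        simpa [hl] using g3 l hl
      · left
        rw [if_pos h]
        simp
        omega
    · apply tracedExists Q hQ h0 h0' _ (fun l => if l ≤ m then g l else c) m _ (hm _)
      · intro l _ hl
        by_cases hl' : l = m
        · subst hl'; simp [g1]
        · have := g2 l (by omega) (by omega)
          simpa [show l ≤ m by omega, show l + 1 ≤ m by omega] using this
      · intro l hl
        simpa [hl] using g3 l hl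
      · right
        rw [if_neg h]
        simp
        omega
  choose F E T B hT using hpath
  -- separation of the two classes
  have sep : ∀ s s' : Fin (m + 2), (s : ℤ) ≤ c → ¬ ((s' : ℤ) ≤ c) → E s = E s' →
      F s (E s) ≠ F s' (E s') := by
    intro s s' hs hs' hE hF
    have T1 := hT s
    have T2 := hT s'
    have w1 := T1.et
    have w2 := T1.tL
    rw [← hE] at hF T2
    have s1 := T1.start
    have s2 := T2.start
    by_cases he : E s = m + 1
    · rw [he] at hF
      omega
    have q1 := T1.step m (by omega) (by omega)
    have q2 := T2.step m (by omega) (by omega)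
    have p1 := T1.nonpos m (by omega) (by omega)
    have p2 := T2.nonpos m (by omega) (by omega)
    have n1 : F s m ≠ c := by intro h; rw [h] at p1; omega
    have n2 : F s' m ≠ c := by intro h; rw [h] at p2; omega
    have r1 : F s (E s) < g (E s) := by
      apply noncross' _ _ _ m (by omega) (fun l h1 h2 => T1.step l h1 (by omega))
        (fun l h1 h2 => g2 l (by omega) h2)
      · intro l h1 h2 h
        have p1 := T1.nonpos l h1 (by omega)
        have p2 := g3 l (by omega)
        rw [h] at p1
        omega
      · omega
    have r2 : g (E s) < F s' (E s) := by
      apply noncross' _ _ _ m (by omega) (fun l h1 h2 => g2 l (by omega) h2)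
        (fun l h1 h2 => T2.step l h1 (by omega))
      · intro l h1 h2 h
        have p1 := T2.nonpos l h1 (by omega)
        have p2 := g3 l (by omega)
        rw [h] at p2
        omega
      · omega
    omega
  have main : ∀ s s' : Fin (m + 2), s < s' → E s = E s' → B s = B s' →
      F s (E s) ≠ F s' (E s') := by
    intro s s' hlt hE hB hF
    have hlt' : (s : ℤ) < (s' : ℤ) := by exact_mod_cast hlt
    by_cases h1 : (s : ℤ) ≤ c
    · by_cases h2 : (s' : ℤ) ≤ c
      · have T1 := hT s
        have T2 := hT s'
        rw [if_pos h1] at T1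
        rw [if_pos h2, ← hE, ← hB] at T2
        rw [← hE] at hF
        exact tracedUnique Q hQ hlt' T1 T2 hF
      · exact sep s s' h1 h2 hE hF
    · have h2 : ¬ ((s' : ℤ) ≤ c) := by omega
      have T1 := hT s
      have T2 := hT s'
      rw [if_neg h1] at T1
      rw [if_neg h2, ← hE, ← hB] at T2
      rw [← hE] at hF
      exact tracedUnique Q hQ hlt' T1 T2 hF
  let φ : Fin (m + 2) → (ℕ × ℤ) × Bool := fun s => ((E s, F s (E s)), B s)
  have hφ : Function.Injective φ := by
    intro s s' h
    simp only [φ, Prod.mk.injEq] at h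
    obtain ⟨⟨hE, hF⟩, hB⟩ := h
    rcases lt_trichotomy s s' with hlt | heq | hgt
    · exact absurd hF (main s s' hlt hE hB)
    · exact heq
    · exact absurd hF.symm (main s' s hgt hE.symm hB.symm)
  -- a zero node is never hit with the tag `true`
  have hzero : ∀ s, B s = true → Q (E s) (F s (E s)) < 0 := by
    intro s hs
    have T1 := hT s
    apply T1.neg _ le_rfl
    rcases Nat.lt_or_eq_of_le T1.et with h | h
    · exact h
    · have := T1.tagE h
      rw [hs] at this
      simp at this
  -- the axis nodes
  obtain ⟨b, hb1, hb2⟩ := firstZero (fun k => Q k 0) m h00 (hm 0) (by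
    intro k
    have h1 := hQ k 0
    have h2 := hout k (0 - 1) (by omega)
    omega)
  obtain ⟨a, ha1, ha2⟩ := firstZero (fun k => Q k (k : ℤ)) m (by simpa using h00) (hm _) (by
    intro k
    have h1 := hQ k ((k + 1 : ℕ) : ℤ)
    have h2 := hout k ((k + 1 : ℕ) : ℤ) (by push_cast; omega)
    have h3 : (((k + 1 : ℕ) : ℤ) - 1) = k := by push_cast; ring
    rw [h2, h3] at h1
    omega)
  have nb : (b + 1, (0 : ℤ)) ∈ S := by
    apply hS
    refine ⟨b, rfl, ?_⟩
    rw [hb1, hout b (0 - 1) (by omega)]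
    omega
  have na : (a + 1, ((a + 1 : ℕ) : ℤ)) ∈ S := by
    apply hS
    refine ⟨a, rfl, ?_⟩
    have h3 : (((a + 1 : ℕ) : ℤ) - 1) = a := by push_cast; ring
    rw [ha1, hout a ((a + 1 : ℕ) : ℤ) (by push_cast; omega), h3]
    omega
  let R : Finset ((ℕ × ℤ) × Bool) := {((b + 1, (0 : ℤ)), true), ((a + 1, ((a + 1 : ℕ) : ℤ)), true)}
  have hRcard : R.card = 2 := by
    apply Finset.card_pair
    intro h
    simp only [Prod.mk.injEq] at h
    have := h.1.2
    push_cast at this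
    omega
  have hdisj : Disjoint (Finset.univ.image φ) R := by
    rw [Finset.disjoint_left]
    intro x hx hxR
    obtain ⟨s, _, rfl⟩ := Finset.mem_image.1 hx
    simp only [R, φ, Finset.mem_insert, Finset.mem_singleton, Prod.mk.injEq] at hxR
    rcases hxR with ⟨⟨h1, h2⟩, h3⟩ | ⟨⟨h1, h2⟩, h3⟩
    · have := hzero s h3
      rw [h2, h1, hb1] at this
      omega
    · have := hzero s h3
      rw [h2, h1, ha1] at this
      omega
  have hsub : Finset.univ.image φ ∪ R ⊆ S ×ˢ (Finset.univ : Finset Bool) := by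
    intro x hx
    rw [Finset.mem_product]
    refine ⟨?_, Finset.mem_univ _⟩
    rcases Finset.mem_union.1 hx with h | h
    · obtain ⟨s, _, rfl⟩ := Finset.mem_image.1 h
      exact hS _ _ (hT s).node
    · simp only [R, Finset.mem_insert, Finset.mem_singleton] at h
      rcases h with rfl | rfl
      · exact nb
      · exact na
  have hcard := Finset.card_le_card hsub
  rw [Finset.card_union_of_disjoint hdisj, Finset.card_image_of_injective _ hφ, hRcard,
    Finset.card_product] at hcard
  simp at hcard
  omega

/-- The firing numbers of an outcome, indexed by level and column. -/
lemma outcomeFiring (w : (ℕ × ℕ) →₀ ℤ) (hw : IsOutcome w) :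
    ∃ (Q : ℕ → ℤ → ℤ) (M : ℕ), (∀ (k : ℕ) (i : ℤ), (i < 0 ∨ (k : ℤ) < i) → Q k i = 0) ∧
      (∀ k i, M < k → Q k i = 0) ∧
      ∀ i j k : ℕ, i + j = k + 1 → w (i, j) = Q k ((i : ℤ) - 1) + Q k i - Q (k + 1) i := by
  unfold IsOutcome at hw
  induction hw using AddSubgroup.closure_induction with
  | mem x hx =>
    obtain ⟨⟨a, b⟩, rfl⟩ := hx
    refine ⟨fun k i => if k = a + b ∧ i = (a : ℤ) then 1 else 0, a + b, ?_, ?_, ?_⟩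
    · intro k i h
      simp only
      rw [if_neg]
      omega
    · intro k i h
      simp only
      rw [if_neg]
      omega
    · intro i j k h
      simp only [splitMove, Finsupp.coe_sub, Finsupp.coe_add, Pi.sub_apply, Pi.add_apply,
        Finsupp.single_apply, Prod.mk.injEq]
      congr 1
      · congr 1
        · refine if_congr ?_ rfl rfl
          omega
        · refine if_congr ?_ rfl rfl
          omega
      · refine if_congr ?_ rfl rfl
        omega
  | zero => exact ⟨fun _ _ => 0, 0, by simp, by simp, by simp⟩
  | add x y _ _ hx hy =>
    obtain ⟨Q, M, h1, h2, h3⟩ := hx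
    obtain ⟨Q', M', h1', h2', h3'⟩ := hy
    refine ⟨fun k i => Q k i + Q' k i, max M M', ?_, ?_, ?_⟩
    · intro k i h
      simp only
      rw [h1 k i h, h1' k i h, add_zero]
    · intro k i h
      simp only
      rw [h2 k i (by omega), h2' k i (by omega), add_zero]
    · intro i j k h
      rw [Finsupp.add_apply, h3 i j k h, h3' i j k h]
      ring
  | neg x _ hx =>
    obtain ⟨Q, M, h1, h2, h3⟩ := hx
    refine ⟨fun k i => - Q k i, M, ?_, ?_, ?_⟩
    · intro k i h
      simp only
      rw [h1 k i h, neg_zero]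
    · intro k i h
      simp only
      rw [h2 k i h, neg_zero]
    · intro i j k h
      rw [Finsupp.neg_apply, h3 i j k h]
      ring

theorem stmt_2 (w : (ℕ × ℕ) →₀ ℤ) (hw : IsOutcome w) (hv : IsValid w)
    (hcard : {p : ℕ × ℕ | 0 < w p}.ncard = 5) :
    ∀ p : ℕ × ℕ, w p ≠ 0 → p.1 + p.2 ≤ 7 := by
  classical
  rintro ⟨i, j⟩ hp
  by_contra hdeg
  simp only [not_le] at hdeg
  obtain ⟨Q, M, hout, hM, hwQ⟩ := outcomeFiring w hw
  have hQ : ∀ k x, Q (k + 1) x ≤ Q k (x - 1) + Q k x := by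
    intro k x
    by_cases hx : 0 ≤ x ∧ x ≤ k + 1
    · obtain ⟨n, rfl⟩ := Int.eq_ofNat_of_zero_le hx.1
      have h1 := hwQ n (k + 1 - n) k (by omega)
      have h2 : 0 ≤ w (n, k + 1 - n) := by
        by_contra h
        have := hv _ (not_le.1 h)
        simp only [Prod.mk.injEq] at this
        omega
      omega
    · rw [hout (k + 1) x (by push_cast; omega), hout k x (by omega), hout k (x - 1) (by omega)]
      simp
  -- the top level
  have hex : ∃ k, 7 ≤ k ∧ ∃ x, Q k x ≠ 0 := by
    obtain ⟨k, hk⟩ : ∃ k, i + j = k + 1 := ⟨i + j - 1, by omega⟩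
    have h1 := hwQ i j k hk
    by_contra hcon
    push Not at hcon
    rw [hcon k (by omega), hcon k (by omega), hcon (k + 1) (by omega)] at h1
    exact hp (by simpa using h1)
  obtain ⟨k, hk7, hk⟩ := hex
  have hkM : k ≤ M := by
    by_contra h
    obtain ⟨x, hx⟩ := hk
    exact hx (hM k x (by omega))
  set m := Nat.findGreatest (fun k => ∃ x, Q k x ≠ 0) M with hmdef
  have hmP : ∃ x, Q m x ≠ 0 := Nat.findGreatest_spec (P := fun k => ∃ x, Q k x ≠ 0) hkM hk
  have hkm : k ≤ m := Nat.le_findGreatest hkM hk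
  have hm1 : ∀ x, Q (m + 1) x = 0 := by
    intro x
    by_cases h : m + 1 ≤ M
    · have := Nat.findGreatest_is_greatest (P := fun k => ∃ x, Q k x ≠ 0) (n := M) (k := m + 1)
        (by omega) h
      push Not at this
      exact this x
    · exact hM _ _ (by omega)
  have hfin : {p : ℕ × ℕ | 0 < w p}.Finite := Set.finite_of_ncard_ne_zero (by omega)
  let S : Finset (ℕ × ℤ) := hfin.toFinset.image (fun p => (p.1 + p.2, (p.1 : ℤ)))
  have hScard : S.card ≤ 5 := by
    refine Finset.card_image_le.trans ?_
    rw [← Set.ncard_eq_toFinset_card _ hfin, hcard]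
  have := nodeCount Q m S hQ hout hm1 hmP (by
    rintro e x ⟨l, rfl, hlt⟩
    have hx : 0 ≤ x ∧ x ≤ l + 1 := by
      by_contra hx
      rw [hout (l + 1) x (by push_cast; omega), hout l x (by omega),
        hout l (x - 1) (by omega)] at hlt
      simp at hlt
    obtain ⟨n, rfl⟩ := Int.eq_ofNat_of_zero_le hx.1
    have h1 := hwQ n (l + 1 - n) l (by omega)
    refine Finset.mem_image.2 ⟨(n, l + 1 - n), ?_, ?_⟩
    · rw [Set.Finite.mem_toFinset, Set.mem_ofPred_eq]
      omega
    · simp only [Prod.mk.injEq, and_true]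
      omega)
  omega
end

section
/- Let w be a nonzero valid chipsplitting outcome whose positive support supp⁺(w) has at most 3 elements. Then there is a positive integer c such that w = c·w₀, where w₀ is one of the following five configurations: (1) −δ_{(0,0)} + δ_{(1,0)} + δ_{(0,1)}; (2) −δ_{(0,0)} + δ_{(3,0)} + 3·δ_{(1,1)} + δ_{(0,3)}; (3) −δ_{(0,0)} + δ_{(2,0)} + 2·δ_{(1,1)} + δ_{(0,2)}; (4) −δ_{(0,0)} + δ_{(2,0)} + δ_{(1,1)} + δ_{(0,1)}; (5) −δ_{(0,0)} + δ_{(1,0)} + δ_{(1,1)} + δ_{(0,2)}. -/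
/-- A function harmonic for splitting moves annihilates every outcome. -/
theorem outcome_pairing (f : ℕ × ℕ → ℚ)
    (hf : ∀ i j : ℕ, f (i + 1, j) + f (i, j + 1) = f (i, j))
    (w : (ℕ × ℕ) →₀ ℤ) (hw : IsOutcome w) :
    w.sum (fun p n => (n : ℚ) * f p) = 0 := by
  have key : ∀ u v : (ℕ × ℕ) →₀ ℤ, (u + v).sum (fun p n => (n : ℚ) * f p)
      = u.sum (fun p n => (n : ℚ) * f p) + v.sum (fun p n => (n : ℚ) * f p) := by
    intro u v
    apply Finsupp.sum_add_index'
    · intro p; simp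
    · intro p a b; push_cast; ring
  have keyneg : ∀ u : (ℕ × ℕ) →₀ ℤ, (-u).sum (fun p n => (n : ℚ) * f p)
      = - u.sum (fun p n => (n : ℚ) * f p) := by
    intro u
    have := key u (-u)
    simp only [add_neg_cancel, Finsupp.sum_zero_index] at this
    linarith
  unfold IsOutcome at hw
  induction hw using AddSubgroup.closure_induction with
  | mem x hx =>
    obtain ⟨⟨i, j⟩, rfl⟩ := hx
    have h := hf i j
    unfold splitMove
    rw [sub_eq_add_neg, key, key, keyneg, Finsupp.sum_single_index (by simp),
      Finsupp.sum_single_index (by simp), Finsupp.sum_single_index (by simp)]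
    push_cast
    linarith
  | zero => simp
  | add x y _ _ hx hy => rw [key, hx, hy, add_zero]
  | neg x _ hx => rw [keyneg, hx, neg_zero]

theorem half_harm (i j : ℕ) :
    (1 / 2 : ℚ) ^ (i + 1 + j) + (1 / 2 : ℚ) ^ (i + (j + 1)) = (1 / 2 : ℚ) ^ (i + j) := by
  ring

/-- A valid nonzero outcome has a debt at the origin. -/
theorem origin_neg (w : (ℕ × ℕ) →₀ ℤ) (hw : IsOutcome w) (hv : IsValid w) (hne : w ≠ 0) :
    w (0, 0) < 0 := by
  by_contra hcon
  have hnn : ∀ p, 0 ≤ w p := by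
    intro p
    by_contra hp
    have := hv p (by omega)
    subst this
    omega
  have h := outcome_pairing (fun p => (1 / 2 : ℚ) ^ (p.1 + p.2)) half_harm w hw
  rw [Finsupp.sum, Finset.sum_eq_zero_iff_of_nonneg] at h
  · apply hne
    ext p
    by_contra hp
    have h1 := h p (by simpa using hp)
    have h2 : ((1 / 2 : ℚ) ^ (p.1 + p.2)) ≠ 0 := by positivity
    have h3 : (w p : ℚ) = 0 := by
      rcases mul_eq_zero.1 h1 with h | h
      · exact h
      · exact absurd h h2
    exact hp (by exact_mod_cast h3)
  · intro p _
    have : (0 : ℚ) ≤ w p := by exact_mod_cast hnn p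
    positivity

/-- Arithmetic heart: the solutions of the pairing equations. -/
theorem arith_core (c A B e : ℤ) (a b i j : ℕ) (hc : 0 < c) (hA : 0 < A) (hB : 0 < B)
    (he : 0 ≤ e) (ha : 1 ≤ a) (hb : 1 ≤ b) (hr0 : ¬ (i = 0 ∧ j = 0))
    (hrp : ¬ (i = a ∧ j = 0)) (hrq : ¬ (i = 0 ∧ j = b)) (hez : e = 0 → i = 1 ∧ j = 1)
    (E1 : B + e * (if i = 0 then 1 else 0) = c)
    (E2 : A + e * (if j = 0 then 1 else 0) = c)
    (E3 : A * (if a = 1 then 1 else 0) - B * b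
      + e * ((if i = 1 then 1 else 0) - (if i = 0 then (j : ℤ) else 0)) = 0)
    (E4 : B * (if b = 1 then 1 else 0) - A * a
      + e * ((if j = 1 then 1 else 0) - (if j = 0 then (i : ℤ) else 0)) = 0)
    (E5 : (A : ℚ) * (1 / 2) ^ a + B * (1 / 2) ^ b + e * (1 / 2) ^ (i + j) = c) :
    A = c ∧ B = c ∧ i = 1 ∧ j = 1 ∧
      ((a = 1 ∧ b = 1 ∧ e = 0) ∨ (a = 3 ∧ b = 3 ∧ e = 3 * c) ∨ (a = 2 ∧ b = 2 ∧ e = 2 * c) ∨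
       (a = 2 ∧ b = 1 ∧ e = c) ∨ (a = 1 ∧ b = 2 ∧ e = c)) := by
  have hi : i ≠ 0 := by
    rintro rfl
    have hj : j ≠ 0 := by tauto
    have hjb : j ≠ b := by tauto
    have hep : 0 < e := lt_of_le_of_ne he (fun h => by have := hez h.symm; omega)
    simp [hj] at E1 E2 E3
    have h1 : A * (if a = 1 then 1 else 0) ≤ A := by split_ifs <;> omega
    simp only [mul_ite, mul_one, mul_zero] at h1
    have hb' : (1 : ℤ) ≤ b := by exact_mod_cast hb
    have hj' : (1 : ℤ) ≤ j := by omega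
    rcases (by omega : (2 : ℤ) ≤ b ∨ (2 : ℤ) ≤ j) with h | h <;> nlinarith
  have hj : j ≠ 0 := by
    rintro rfl
    have hia : i ≠ a := by tauto
    have hep : 0 < e := lt_of_le_of_ne he (fun h => by have := hez h.symm; omega)
    simp [hi] at E1 E2 E4
    have h1 : B * (if b = 1 then 1 else 0) ≤ B := by split_ifs <;> omega
    simp only [mul_ite, mul_one, mul_zero] at h1
    have ha' : (1 : ℤ) ≤ a := by exact_mod_cast ha
    have hj' : (1 : ℤ) ≤ i := by omega
    rcases (by omega : (2 : ℤ) ≤ a ∨ (2 : ℤ) ≤ i) with h | h <;> nlinarith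
  simp only [hi, hj, if_false, mul_zero, add_zero, sub_zero] at E1 E2 E3 E4
  subst E1
  subst E2
  refine ⟨rfl, rfl, ?_⟩
  by_cases ha1 : a = 1
  · by_cases hb1 : b = 1
    · subst ha1 hb1
      have h0 : (e : ℚ) * (1 / 2) ^ (i + j) = 0 := by linarith
      have h2 : ((1 / 2 : ℚ) ^ (i + j)) ≠ 0 := by positivity
      have h3 : e = 0 := by
        rcases mul_eq_zero.1 h0 with h | h
        · exact_mod_cast h
        · exact absurd h h2
      have := hez h3
      omega
    · subst ha1
      have hb' : (2 : ℤ) ≤ b := by omega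
      have hi1 : i = 1 := by
        by_contra h
        simp [h] at E3
        nlinarith
      have hj1 : j = 1 := by
        by_contra h
        simp [h, hb1] at E4
        omega
      simp [hi1, hj1, hb1] at E3 E4
      have : (b : ℤ) = 2 := by
        have : A * ((b : ℤ) - 2) = 0 := by linarith
        rcases mul_eq_zero.1 this with h | h <;> omega
      omega
  · have ha' : (2 : ℤ) ≤ a := by omega
    have hb' : (1 : ℤ) ≤ b := by omega
    have hi1 : i = 1 := by
      by_contra h
      simp [h, ha1] at E3
      omega
    have hj1 : j = 1 := by
      by_contra h
      have : A * (if b = 1 then 1 else 0) ≤ A := by split_ifs <;> omega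
      simp only [h, if_false] at E4
      nlinarith
    by_cases hb1 : b = 1
    · subst hb1
      simp [hi1, hj1, ha1] at E3 E4
      have : (a : ℤ) = 2 := by
        have : A * ((a : ℤ) - 2) = 0 := by linarith
        rcases mul_eq_zero.1 this with h | h <;> omega
      omega
    · simp [hi1, hj1, ha1, hb1] at E3 E4
      have hab : (a : ℤ) = b := by
        have : A * ((a : ℤ) - b) = 0 := by linarith
        rcases mul_eq_zero.1 this with h | h <;> omega
      have hab : a = b := by exact_mod_cast hab
      subst hab hi1 hj1
      have hlt : a < 4 := by
        by_contra h
        have h4 : (4 : ℤ) ≤ a := by omega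
        have he4 : 4 * A ≤ e := by nlinarith
        have he4 : 4 * (A : ℚ) ≤ e := by exact_mod_cast he4
        have hAq : (0 : ℚ) < A := by exact_mod_cast hA
        have hpos : (0 : ℚ) < A * (1 / 2) ^ a := by positivity
        norm_num at E5
        linarith
      have : a = 2 ∨ a = 3 := by omega
      rcases this with rfl | rfl <;> push_cast at E3 <;> omega

theorem split_form (w : (ℕ × ℕ) →₀ ℤ) (hv : IsValid w) (h0 : w (0, 0) < 0)
    (hcard : {p : ℕ × ℕ | 0 < w p}.ncard ≤ 3) (a b : ℕ) (ha : 0 < w (a, 0)) (hb : 0 < w (0, b)) :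
    ∃ (e : ℤ) (i j : ℕ), 0 ≤ e ∧ ¬ (i = 0 ∧ j = 0) ∧ ¬ (i = a ∧ j = 0) ∧ ¬ (i = 0 ∧ j = b) ∧
      (e = 0 → i = 1 ∧ j = 1) ∧
      w = Finsupp.single (0, 0) (w (0, 0)) + Finsupp.single (a, 0) (w (a, 0))
        + Finsupp.single (0, b) (w (0, b)) + Finsupp.single (i, j) e := by
  have ha0 : a ≠ 0 := by rintro rfl; omega
  have hb0 : b ≠ 0 := by rintro rfl; omega
  by_cases hex : ∃ r : ℕ × ℕ, 0 < w r ∧ r ≠ (a, 0) ∧ r ≠ (0, b)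
  · obtain ⟨⟨i, j⟩, hr, hra, hrb⟩ := hex
    have hr0 : ((i, j) : ℕ × ℕ) ≠ (0, 0) := by
      intro h; rw [h] at hr; omega
    have hfin : {p : ℕ × ℕ | 0 < w p}.Finite := by
      apply w.support.finite_toSet.subset
      intro p hp
      have hp : 0 < w p := hp
      simp only [Finset.mem_coe, Finsupp.mem_support_iff]
      omega
    have hall : ∀ s : ℕ × ℕ, 0 < w s → s = (a, 0) ∨ s = (0, b) ∨ s = (i, j) := by
      intro s hs
      by_contra hcon
      push Not at hcon
      obtain ⟨h1, h2, h3⟩ := hcon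
      have hsub : (({s, (i, j), (a, 0), (0, b)} : Finset (ℕ × ℕ)) : Set (ℕ × ℕ))
          ⊆ {p : ℕ × ℕ | 0 < w p} := by
        intro p hp
        simp only [Finset.coe_insert, Finset.coe_singleton, Set.mem_insert_iff,
          Set.mem_singleton_iff] at hp
        rcases hp with rfl | rfl | rfl | rfl <;> assumption
      have h4 := Set.ncard_le_ncard hsub hfin
      rw [Set.ncard_coe_finset] at h4
      have hab : ((a, 0) : ℕ × ℕ) ≠ (0, b) := by simp [ha0]
      rw [Finset.card_insert_of_notMem (by simp only [Finset.mem_insert, Finset.mem_singleton]; tauto),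
        Finset.card_insert_of_notMem (by simp only [Finset.mem_insert, Finset.mem_singleton]; tauto),
        Finset.card_insert_of_notMem (by simp only [Finset.mem_singleton]; tauto),
        Finset.card_singleton] at h4
      omega
    refine ⟨w (i, j), i, j, hr.le, by simpa using hr0, by simpa using hra, by simpa using hrb,
      fun h => by omega, ?_⟩
    ext s
    simp only [Finsupp.add_apply, Finsupp.single_apply]
    by_cases hs0 : s = (0, 0)
    · subst hs0; simp [ha0, hb0, hr0]
    by_cases hs : 0 < w s
    · rcases hall s hs with rfl | rfl | rfl
      · simp [ha0, hb0, hra, Ne.symm ha0]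
      · simp [ha0, hb0, hrb, Ne.symm hb0]
      · simp [Ne.symm hr0, Ne.symm hra, Ne.symm hrb]
    · have : ¬ w s < 0 := fun h => hs0 (hv s h)
      have hz : w s = 0 := by omega
      have e1 : ((a, 0) : ℕ × ℕ) ≠ s := by rintro rfl; omega
      have e2 : ((0, b) : ℕ × ℕ) ≠ s := by rintro rfl; omega
      have e3 : ((i, j) : ℕ × ℕ) ≠ s := by rintro rfl; omega
      simp [hz, e1, e2, e3, Ne.symm hs0]
  · push Not at hex
    refine ⟨0, 1, 1, le_rfl, by omega, by omega, by omega, by simp, ?_⟩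
    ext s
    simp only [Finsupp.add_apply, Finsupp.single_apply]
    by_cases hs0 : s = (0, 0)
    · subst hs0; simp [ha0, hb0]
    by_cases hsa : s = (a, 0)
    · subst hsa; simp [ha0, hb0, Ne.symm ha0]
    by_cases hsb : s = (0, b)
    · subst hsb; simp [ha0, hb0, Ne.symm hb0]
    have : ¬ w s < 0 := fun h => hs0 (hv s h)
    have : ¬ 0 < w s := fun h => hsb (hex s h hsa)
    have hz : w s = 0 := by omega
    simp [hz, Ne.symm hs0, Ne.symm hsa, Ne.symm hsb]

theorem exists_pos_of_pairing (w : (ℕ × ℕ) →₀ ℤ) (h0 : w (0, 0) < 0) (P : ℕ × ℕ → Prop)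
    [DecidablePred P] (hP : P (0, 0)) 
    (h : w.sum (fun p n => (n : ℚ) * (if P p then 1 else 0)) = 0) :
    ∃ p, P p ∧ 0 < w p := by
  by_contra hcon
  push Not at hcon
  have : w.sum (fun p n => (n : ℚ) * (if P p then 1 else 0)) < 0 := by
    apply Finset.sum_neg'
    · intro p _
      dsimp only
      split_ifs with hp
      · have := hcon p hp
        simpa using this
      · simp
    · refine ⟨(0, 0), ?_, ?_⟩
      · simp only [Finsupp.mem_support_iff]; omega
      · simpa [hP] using h0
  linarith

theorem stmt_3 (w : (ℕ × ℕ) →₀ ℤ) (hw : IsOutcome w) (hv : IsValid w) (hne : w ≠ 0)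
    (hcard : {p : ℕ × ℕ | 0 < w p}.ncard ≤ 3) :
    ∃ c : ℤ, 0 < c ∧
      (w = c • (-Finsupp.single (0, 0) 1 + Finsupp.single (1, 0) 1
            + Finsupp.single (0, 1) 1 : (ℕ × ℕ) →₀ ℤ) ∨
       w = c • (-Finsupp.single (0, 0) 1 + Finsupp.single (3, 0) 1
            + Finsupp.single (1, 1) 3 + Finsupp.single (0, 3) 1 : (ℕ × ℕ) →₀ ℤ) ∨
       w = c • (-Finsupp.single (0, 0) 1 + Finsupp.single (2, 0) 1
            + Finsupp.single (1, 1) 2 + Finsupp.single (0, 2) 1 : (ℕ × ℕ) →₀ ℤ) ∨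
       w = c • (-Finsupp.single (0, 0) 1 + Finsupp.single (2, 0) 1
            + Finsupp.single (1, 1) 1 + Finsupp.single (0, 1) 1 : (ℕ × ℕ) →₀ ℤ) ∨
       w = c • (-Finsupp.single (0, 0) 1 + Finsupp.single (1, 0) 1
            + Finsupp.single (1, 1) 1 + Finsupp.single (0, 2) 1 : (ℕ × ℕ) →₀ ℤ)) := by
  have h0 := origin_neg w hw hv hne
  have H1 : ∀ i j : ℕ, (fun p : ℕ × ℕ => (if p.1 = 0 then 1 else 0 : ℚ)) (i + 1, j)
      + (fun p : ℕ × ℕ => (if p.1 = 0 then 1 else 0 : ℚ)) (i, j + 1)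
      = (fun p : ℕ × ℕ => (if p.1 = 0 then 1 else 0 : ℚ)) (i, j) := by
    intro i j; simp
  have H2 : ∀ i j : ℕ, (fun p : ℕ × ℕ => (if p.2 = 0 then 1 else 0 : ℚ)) (i + 1, j)
      + (fun p : ℕ × ℕ => (if p.2 = 0 then 1 else 0 : ℚ)) (i, j + 1)
      = (fun p : ℕ × ℕ => (if p.2 = 0 then 1 else 0 : ℚ)) (i, j) := by
    intro i j; simp
  obtain ⟨⟨z, b⟩, hz, hb⟩ := exists_pos_of_pairing w h0 (fun p => p.1 = 0) rfl
    (outcome_pairing _ H1 w hw)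
  obtain ⟨⟨a, z'⟩, hz', ha⟩ := exists_pos_of_pairing w h0 (fun p => p.2 = 0) rfl
    (outcome_pairing _ H2 w hw)
  dsimp only at hz hz'
  subst hz hz'
  have ha0 : a ≠ 0 := by rintro rfl; omega
  have hb0 : b ≠ 0 := by rintro rfl; omega
  obtain ⟨e, i, j, he, hr0, hrp, hrq, hez, hform⟩ := split_form w hv h0 hcard a b ha hb
  have pair : ∀ f : ℕ × ℕ → ℚ, (∀ i j : ℕ, f (i + 1, j) + f (i, j + 1) = f (i, j)) →
      (w (0, 0) : ℚ) * f (0, 0) + w (a, 0) * f (a, 0) + w (0, b) * f (0, b) + e * f (i, j) = 0 := by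
    intro f hf
    have h := outcome_pairing f hf w hw
    have key : ∀ u v : (ℕ × ℕ) →₀ ℤ, (u + v).sum (fun p n => (n : ℚ) * f p)
        = u.sum (fun p n => (n : ℚ) * f p) + v.sum (fun p n => (n : ℚ) * f p) := by
      intro u v
      apply Finsupp.sum_add_index'
      · intro p; simp
      · intro p a b; push_cast; ring
    rw [hform, key, key, key, Finsupp.sum_single_index (by simp),
      Finsupp.sum_single_index (by simp), Finsupp.sum_single_index (by simp),
      Finsupp.sum_single_index (by simp)] at h
    exact h
  generalize hA : w (a, 0) = A at *
  generalize hB : w (0, b) = B at *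
  obtain ⟨c, hc⟩ : ∃ c, w (0, 0) = -c := ⟨-w (0, 0), by simp⟩
  rw [hc] at hform pair h0
  have E1 := pair (fun p => if p.1 = 0 then 1 else 0) H1
  have E2 := pair (fun p => if p.2 = 0 then 1 else 0) H2
  have E3 := pair (fun p => (if p.1 = 1 then 1 else 0) - (if p.1 = 0 then (p.2 : ℚ) else 0)) (by
    intro i j
    rcases i with _ | _ | i <;> simp)
  have E4 := pair (fun p => (if p.2 = 1 then 1 else 0) - (if p.2 = 0 then (p.1 : ℚ) else 0)) (by
    intro i j
    rcases j with _ | _ | j <;> simp)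
  have E5 := pair (fun p => (1 / 2 : ℚ) ^ (p.1 + p.2)) half_harm
  simp [ha0, hb0] at E1 E2 E3 E4
  have core := arith_core c A B e a b i j (by omega) ha hb he (by omega) (by omega) hr0 hrp hrq hez
    (by
      have : ((B + e * (if i = 0 then 1 else 0) : ℤ) : ℚ) = (c : ℤ) := by
        push_cast; simp; linarith
      exact_mod_cast this)
    (by
      have : ((A + e * (if j = 0 then 1 else 0) : ℤ) : ℚ) = (c : ℤ) := by
        push_cast; simp; linarith
      exact_mod_cast this)
    (by
      have : ((A * (if a = 1 then 1 else 0) - B * b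
        + e * ((if i = 1 then 1 else 0) - (if i = 0 then (j : ℤ) else 0)) : ℤ) : ℚ)
          = (0 : ℤ) := by
        push_cast; simp; linarith
      exact_mod_cast this)
    (by
      have : ((B * (if b = 1 then 1 else 0) - A * a
        + e * ((if j = 1 then 1 else 0) - (if j = 0 then (i : ℤ) else 0)) : ℤ) : ℚ)
          = (0 : ℤ) := by
        push_cast; simp; linarith
      exact_mod_cast this)
    (by
      simp only [add_zero, zero_add, pow_zero, mul_one] at E5
      push_cast at E5
      linarith)
  obtain ⟨rfl, rfl, rfl, rfl, hcases⟩ := core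
  refine ⟨B, hb, ?_⟩
  rcases hcases with ⟨rfl, rfl, rfl⟩ | ⟨rfl, rfl, rfl⟩ | ⟨rfl, rfl, rfl⟩ | ⟨rfl, rfl, he'⟩ |
    ⟨rfl, rfl, he'⟩
  · left
    rw [hform]
    simp [smul_add, smul_neg]
  · right; left
    rw [hform]
    simp only [smul_add, smul_neg, Finsupp.smul_single, smul_eq_mul, mul_one, Finsupp.single_neg,
      mul_comm (3 : ℤ) B]
    abel
  · right; right; left
    rw [hform]
    simp only [smul_add, smul_neg, Finsupp.smul_single, smul_eq_mul, mul_one, Finsupp.single_neg,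
      mul_comm (2 : ℤ) B]
    abel
  · right; right; right; left
    rw [hform, he']
    simp only [smul_add, smul_neg, Finsupp.smul_single, smul_eq_mul, mul_one, Finsupp.single_neg]
    abel
  · right; right; right; right
    rw [hform, he']
    simp only [smul_add, smul_neg, Finsupp.smul_single, smul_eq_mul, mul_one, Finsupp.single_neg]
    abel
end

section
/- Let w be a nonzero valid chipsplitting outcome whose positive support supp⁺(w) has at most 2 elements. Then supp⁺(w) = {(1,0), (0,1)}. -/
/-- Evaluation of a configuration as a polynomial in `x` and `1 - x`. -/
noncomputable def evAt (x : ℚ) : ((ℕ × ℕ) →₀ ℤ) →+ ℚ :=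
  Finsupp.liftAddHom (fun p => (AddMonoidHom.mulRight (x ^ p.1 * (1 - x) ^ p.2)).comp
    (Int.castAddHom ℚ))

lemma evAt_single (x : ℚ) (p : ℕ × ℕ) (c : ℤ) :
    evAt x (Finsupp.single p c) = c * (x ^ p.1 * (1 - x) ^ p.2) := by
  simp [evAt]

lemma evAt_sum (x : ℚ) (w : (ℕ × ℕ) →₀ ℤ) :
    evAt x w = ∑ p ∈ w.support, (w p : ℚ) * (x ^ p.1 * (1 - x) ^ p.2) := by
  simp [evAt, Finsupp.sum]

lemma evAt_outcome (x : ℚ) (w : (ℕ × ℕ) →₀ ℤ) (hw : IsOutcome w) : evAt x w = 0 := by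
  have : AddSubgroup.closure (Set.range splitMove) ≤ (evAt x).ker := by
    rw [AddSubgroup.closure_le]
    rintro _ ⟨p, rfl⟩
    simp only [SetLike.mem_coe, AddMonoidHom.mem_ker, splitMove, map_sub, map_add, evAt_single]
    push_cast
    ring
  exact this hw

/-- If all terms are nonpositive, and one is negative, contradiction. -/
lemma exists_pos_term (x : ℚ) (w : (ℕ × ℕ) →₀ ℤ) (hw : IsOutcome w) (h0 : w (0, 0) < 0) :
    ∃ p : ℕ × ℕ, 0 < (w p : ℚ) * (x ^ p.1 * (1 - x) ^ p.2) := by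
  by_contra! h
  have h1 := evAt_outcome x w hw
  rw [evAt_sum] at h1
  have h2 := (Finset.sum_eq_zero_iff_of_nonpos (fun p _ => h p)).1 h1 (0, 0)
    (by simpa using h0.ne)
  simp at h2
  omega

theorem stmt_4 (w : (ℕ × ℕ) →₀ ℤ) (hw : IsOutcome w) (hv : IsValid w) (hne : w ≠ 0)
    (hcard : {p : ℕ × ℕ | 0 < w p}.ncard ≤ 2) :
    {p : ℕ × ℕ | 0 < w p} = {(1, 0), (0, 1)} := by
  have h0 : w (0, 0) < 0 := by
    by_contra hc
    have hnn : ∀ p, 0 ≤ w p := by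
      intro p
      by_contra hp
      have := hv p (by omega)
      subst this
      omega
    have h1 := evAt_outcome (1/2) w hw
    rw [evAt_sum, Finset.sum_eq_zero_iff_of_nonneg] at h1
    · apply hne
      ext p
      by_contra hp
      have h2 := h1 p (by simpa using hp)
      norm_num at h2
      exact hp (by simpa using h2)
    · intro p _
      have : (0 : ℚ) ≤ w p := by exact_mod_cast hnn p
      norm_num
      positivity
  obtain ⟨⟨i, j⟩, hp⟩ := exists_pos_term 0 w hw h0
  obtain ⟨⟨k, l⟩, hq⟩ := exists_pos_term 1 w hw h0
  have hi : i = 0 := by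
    by_contra h
    simp [h] at hp
  have hl : l = 0 := by
    by_contra h
    simp [h] at hq
  subst hi hl
  simp at hp hq
  have hj : j ≠ 0 := by
    rintro rfl
    omega
  have hk : k ≠ 0 := by
    rintro rfl
    omega
  have hfin : {p : ℕ × ℕ | 0 < w p}.Finite :=
    w.support.finite_toSet.subset (fun p (hp : 0 < w p) => by simpa using hp.ne')
  have hP : ({(0, j), (k, 0)} : Set (ℕ × ℕ)) = {p : ℕ × ℕ | 0 < w p} := by
    apply Set.eq_of_subset_of_ncard_le _ _ hfin
    · rintro p (rfl | rfl)
      · exact hp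
      · exact hq
    · rw [Set.ncard_pair (by simp [hj])]
      exact hcard
  have hw' : w = Finsupp.single (0, 0) (w (0, 0)) + Finsupp.single (0, j) (w (0, j))
      + Finsupp.single (k, 0) (w (k, 0)) := by
    ext p
    by_cases h1 : p = (0, 0)
    · subst h1
      simp [hj, hk]
    by_cases h2 : p = (0, j)
    · subst h2
      simp [hj, hk, Ne.symm hj]
    by_cases h3 : p = (k, 0)
    · subst h3
      simp [hj, hk, Ne.symm hk]
    have h4 : ¬ 0 < w p := by
      intro h
      have : p ∈ ({(0, j), (k, 0)} : Set (ℕ × ℕ)) := hP ▸ h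
      simp [h2, h3] at this
    have h5 : ¬ w p < 0 := fun h => h1 (hv p h)
    have h6 : w p = 0 := by omega
    simp [h6, Finsupp.single_apply, Ne.symm h1, Ne.symm h2, Ne.symm h3]
  have key : ∀ x : ℚ, (w (0, 0) : ℚ) + w (0, j) * (1 - x) ^ j + w (k, 0) * x ^ k = 0 := by
    intro x
    have h := evAt_outcome x w hw
    rw [hw'] at h
    simpa only [map_add, evAt_single, pow_zero, mul_one, one_mul] using h
  have e0 := key 0
  have e1 := key 1
  have e2 := key (1/2)
  simp [hj, hk] at e0 e1
  have hc : (w (0, 0) : ℚ) < 0 := by exact_mod_cast h0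
  have ea : (w (0, j) : ℚ) = - w (0, 0) := by linarith
  have eb : (w (k, 0) : ℚ) = - w (0, 0) := by linarith
  rw [ea, eb] at e2
  have e3 : (1/2 : ℚ) ^ j + (1/2) ^ k = 1 := by
    have : (w (0, 0) : ℚ) * (1 - (1/2 : ℚ) ^ j - (1/2) ^ k) = 0 := by
      rw [show (1 : ℚ) - 1/2 = 1/2 by norm_num] at e2
      linear_combination e2
    rcases mul_eq_zero.1 this with h | h
    · exact absurd h hc.ne
    · linarith
  have b1 : ∀ n : ℕ, n ≠ 0 → (1/2 : ℚ) ^ n ≤ 1/2 := fun n hn => by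
    simpa using pow_le_pow_of_le_one (a := (1/2 : ℚ)) (by norm_num) (by norm_num)
      (Nat.one_le_iff_ne_zero.2 hn)
  have b2 : ∀ n : ℕ, 2 ≤ n → (1/2 : ℚ) ^ n ≤ 1/4 := fun n hn => by
    have := pow_le_pow_of_le_one (a := (1/2 : ℚ)) (by norm_num) (by norm_num) hn
    linarith
  have hj1 : j = 1 := by
    by_contra h
    have := b2 j (by omega)
    have := b1 k hk
    linarith
  have hk1 : k = 1 := by
    by_contra h
    have := b2 k (by omega)
    have := b1 j hj
    linarith
  rw [← hP, hj1, hk1, Set.pair_comm]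
end

section
/- Let w be a valid chipsplitting outcome of degree d ≥ 1. Then: (a) (0,0) ∈ supp⁻(w), and there exist i, j with 1 ≤ i ≤ d and 1 ≤ j ≤ d such that (i,0) ∈ supp⁺(w) and (0,j) ∈ supp⁺(w); (b) there exist distinct i, j ∈ {0, …, d} such that (i, d−i) ∈ supp⁺(w) and (j, d−j) ∈ supp⁺(w). -/
lemma outcome_sum {M : Type*} [AddCommGroup M] (f : ℕ × ℕ → M)
    (hf : ∀ i j, f (i + 1, j) + f (i, j + 1) = f (i, j))
    (w : (ℕ × ℕ) →₀ ℤ) (hw : IsOutcome w) : ∑ p ∈ w.support, w p • f p = 0 := by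
  change Finsupp.linearCombination ℤ f w = 0
  unfold IsOutcome at hw
  induction hw using AddSubgroup.closure_induction with
  | mem x hx =>
    obtain ⟨⟨i, j⟩, rfl⟩ := hx
    simp [splitMove, hf]
  | zero => simp
  | add x y _ _ hx hy => rw [map_add, hx, hy, add_zero]
  | neg x _ hx => rw [map_neg, hx, neg_zero]

lemma coeff_aux (i j d : ℕ) (h : i + j ≤ d) :
    ((Polynomial.X : Polynomial ℤ) ^ i * (1 - Polynomial.X) ^ j).coeff d
      = if i + j = d then (-1) ^ j else 0 := by
  have h1 : (1 - Polynomial.X : Polynomial ℤ).natDegree ≤ 1 := by compute_degree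
  split_ifs with he
  · subst he
    rw [add_comm i j, Polynomial.coeff_X_pow_mul]
    have := Polynomial.coeff_pow_of_natDegree_le (m := j) h1
    rw [mul_one] at this
    rw [this]
    simp [Polynomial.coeff_one]
  · apply Polynomial.coeff_eq_zero_of_natDegree_lt
    refine lt_of_le_of_lt Polynomial.natDegree_mul_le ?_
    have h2 := Polynomial.natDegree_pow_le_of_le j h1
    have h3 := Polynomial.natDegree_X_pow (R := ℤ) i
    omega

theorem stmt_5 (d : ℕ) (hd : 1 ≤ d) (w : (ℕ × ℕ) →₀ ℤ)
    (hw : IsOutcome w) (hv : IsValid w)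
    (hdegle : ∀ p : ℕ × ℕ, w p ≠ 0 → p.1 + p.2 ≤ d)
    (hdegeq : ∃ p : ℕ × ℕ, w p ≠ 0 ∧ p.1 + p.2 = d) :
    (w (0, 0) < 0 ∧
      (∃ i : ℕ, 1 ≤ i ∧ i ≤ d ∧ 0 < w (i, 0)) ∧
      (∃ j : ℕ, 1 ≤ j ∧ j ≤ d ∧ 0 < w (0, j))) ∧
    (∃ i j : ℕ, i ≤ d ∧ j ≤ d ∧ i ≠ j ∧ 0 < w (i, d - i) ∧ 0 < w (j, d - j)) := by
  have hnn : ∀ p : ℕ × ℕ, p ≠ (0, 0) → 0 ≤ w p := fun p hp => by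
    by_contra h
    exact hp (hv p (not_le.mp h))
  have h00 : w (0, 0) < 0 := by
    by_contra h
    have hall : ∀ p, 0 ≤ w p := fun p => by
      by_cases hp : p = (0, 0)
      · rw [hp]; exact not_lt.mp h
      · exact hnn p hp
    obtain ⟨p, hp, -⟩ := hdegeq
    have hs := outcome_sum (fun p : ℕ × ℕ => (1 / 2 : ℚ) ^ (p.1 + p.2))
      (fun i j => by simp only; ring) w hw
    rw [Finset.sum_eq_zero_iff_of_nonneg] at hs
    · have := hs p (Finsupp.mem_support_iff.mpr hp)
      simp [hp] at this
    · intro q _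
      exact zsmul_nonneg (by positivity) (hall q)
  refine ⟨⟨h00, ?_, ?_⟩, ?_⟩
  · have hs := outcome_sum (fun p : ℕ × ℕ => (0 : ℤ) ^ p.2)
      (fun i j => by simp [pow_succ]) w hw
    by_contra! hc
    have : ∑ p ∈ w.support, w p • (0 : ℤ) ^ p.2 < ∑ p ∈ w.support, 0 := by
      apply Finset.sum_lt_sum
      · rintro ⟨i, j⟩ hp
        have hle := hdegle _ (Finsupp.mem_support_iff.mp hp)
        rcases Nat.eq_zero_or_pos j with rfl | hj
        · rcases Nat.eq_zero_or_pos i with rfl | hi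
          · simpa using h00.le
          · simpa using hc i hi (by simpa using hle)
        · simp [hj.ne']
      · exact ⟨(0, 0), Finsupp.mem_support_iff.mpr h00.ne, by simpa using h00⟩
    simp only [Finset.sum_const_zero] at this
    exact this.ne hs
  · have hs := outcome_sum (fun p : ℕ × ℕ => (0 : ℤ) ^ p.1)
      (fun i j => by simp [pow_succ]) w hw
    by_contra! hc
    have : ∑ p ∈ w.support, w p • (0 : ℤ) ^ p.1 < ∑ p ∈ w.support, 0 := by
      apply Finset.sum_lt_sum
      · rintro ⟨i, j⟩ hp
        have hle := hdegle _ (Finsupp.mem_support_iff.mp hp)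
        rcases Nat.eq_zero_or_pos i with rfl | hi
        · rcases Nat.eq_zero_or_pos j with rfl | hj
          · simpa using h00.le
          · simpa using hc j hj (by simpa using hle)
        · simp [hi.ne']
      · exact ⟨(0, 0), Finsupp.mem_support_iff.mpr h00.ne, by simpa using h00⟩
    simp only [Finset.sum_const_zero] at this
    exact this.ne hs
  · have hs := outcome_sum (fun p : ℕ × ℕ =>
        ((Polynomial.X : Polynomial ℤ) ^ p.1 * (1 - Polynomial.X) ^ p.2).coeff d)
      (fun i j => by
        simp only
        rw [← Polynomial.coeff_add]
        congr 1
        ring) w hw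
    obtain ⟨p, hp, hpd⟩ := hdegeq
    have hq : ∃ q, w q ≠ 0 ∧ q.1 + q.2 = d ∧ q ≠ p := by
      by_contra! hc
      rw [Finset.sum_eq_single p] at hs
      · rw [coeff_aux _ _ _ hpd.le, if_pos hpd] at hs
        simp [hp] at hs
      · intro q hqm hqp
        have hq0 := Finsupp.mem_support_iff.mp hqm
        rw [coeff_aux _ _ _ (hdegle q hq0), if_neg, smul_zero]
        exact fun h => hqp (hc q hq0 h)
      · intro h
        exact absurd (Finsupp.mem_support_iff.mpr hp) h
    have hpos : ∀ q : ℕ × ℕ, w q ≠ 0 → q.1 + q.2 = d → 0 < w (q.1, d - q.1) := by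
      rintro ⟨a, b⟩ h1 h2
      simp only at h2
      have hb : d - a = b := by omega
      simp only [hb]
      refine lt_of_le_of_ne (hnn _ ?_) h1.symm
      intro h
      simp only [Prod.mk.injEq] at h
      omega
    obtain ⟨q, hq0, hqd, hqp⟩ := hq
    refine ⟨p.1, q.1, by omega, by omega, ?_, hpos p hp hpd, hpos q hq0 hqd⟩
    intro h
    exact hqp (Prod.ext h.symm (by omega))
end

section
/- Let w be a chipsplitting outcome with w(i,j) ≥ 0 for all (i,j) ∈ ℕ × ℕ (i.e., supp⁻(w) = ∅). Then w = 0. -/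
theorem stmt_6 (w : (ℕ × ℕ) →₀ ℤ) (hw : IsOutcome w)
    (hpos : ∀ p : ℕ × ℕ, 0 ≤ w p) :
    w = 0 := by
  let f : ((ℕ × ℕ) →₀ ℤ) →+ ℚ := Finsupp.liftAddHom (fun p : ℕ × ℕ =>
    (AddMonoidHom.mulRight ((1 / 2 : ℚ) ^ (p.1 + p.2))).comp (Int.castAddHom ℚ))
  have hf1 : ∀ p n, f (Finsupp.single p n) = (n : ℚ) * (1 / 2 : ℚ) ^ (p.1 + p.2) := by
    intro p n
    simp [f]
  have hf : ∀ v, f v = ∑ p ∈ v.support, (v p : ℚ) * (1 / 2 : ℚ) ^ (p.1 + p.2) := by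
    intro v
    simp [f, Finsupp.sum]
  have h0 : AddSubgroup.closure (Set.range splitMove) ≤ f.ker := by
    rw [AddSubgroup.closure_le]
    rintro _ ⟨p, rfl⟩
    change f (splitMove p) = 0
    rw [splitMove, map_sub, map_add, hf1, hf1, hf1]
    push_cast
    ring
  have h1 : f w = 0 := h0 hw
  rw [hf, Finset.sum_eq_zero_iff_of_nonneg
    (fun p _ => mul_nonneg (by exact_mod_cast hpos p) (by positivity))] at h1
  ext p
  by_contra hp
  have h2 := h1 p (Finsupp.mem_support_iff.mpr hp)
  rcases mul_eq_zero.mp h2 with h | h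
  · exact hp (by exact_mod_cast h)
  · exact absurd h (by positivity)
end

section
/- A chip configuration w : ℕ × ℕ → ℤ is a chipsplitting outcome if and only if the polynomial ∑_{(i,j)} w(i,j)·X^i·(1−X)^j equals 0 in ℤ[X] (the sum ranging over the finite support of w). -/
open Polynomial in
/-- Evaluation of a chip configuration as a polynomial. -/
noncomputable def chipEval : ((ℕ × ℕ) →₀ ℤ) →ₗ[ℤ] ℤ[X] :=
  Finsupp.linearCombination ℤ (fun p : ℕ × ℕ => (X ^ p.1 * (1 - X) ^ p.2 : ℤ[X]))

open Polynomial in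
/-- Place the coefficients of a polynomial along the bottom row. -/
noncomputable def chipRow : ℤ[X] →ₗ[ℤ] ((ℕ × ℕ) →₀ ℤ) :=
  (Polynomial.basisMonomials ℤ).constr ℤ (fun i => Finsupp.single (i, 0) (1 : ℤ))

open Polynomial in
theorem chipRow_X_pow (i : ℕ) : chipRow (X ^ i : ℤ[X]) = Finsupp.single (i, 0) 1 := by
  have h := (Polynomial.basisMonomials ℤ).constr_basis ℤ
    (fun i => Finsupp.single ((i, 0) : ℕ × ℕ) (1 : ℤ)) i
  rw [Polynomial.coe_basisMonomials] at h
  rw [← Polynomial.monomial_one_right_eq_X_pow]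
  exact h

open Polynomial in
theorem chip_single_mem (j : ℕ) : ∀ i : ℕ,
    Finsupp.single (i, j) (1 : ℤ) - chipRow (X ^ i * (1 - X) ^ j : ℤ[X]) ∈
      AddSubgroup.closure (Set.range splitMove) := by
  induction j with
  | zero => intro i; simp [chipRow_X_pow]
  | succ j ih =>
    intro i
    have hm : splitMove (i, j) ∈ AddSubgroup.closure (Set.range splitMove) :=
      AddSubgroup.subset_closure ⟨_, rfl⟩
    have h := add_mem hm (sub_mem (ih i) (ih (i + 1)))
    have e : (X ^ i * (1 - X) ^ (j + 1) : ℤ[X]) =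
        X ^ i * (1 - X) ^ j - X ^ (i + 1) * (1 - X) ^ j := by ring
    rw [e, map_sub]
    convert h using 1
    simp only [splitMove]
    abel

theorem chip_sub_mem (w : (ℕ × ℕ) →₀ ℤ) :
    w - chipRow (chipEval w) ∈ AddSubgroup.closure (Set.range splitMove) := by
  induction w using Finsupp.induction_linear with
  | zero => simp
  | add f g hf hg =>
    have h := add_mem hf hg
    rw [map_add, map_add]
    convert h using 1
    abel
  | single p a =>
    have h := AddSubgroup.zsmul_mem _ (chip_single_mem p.2 p.1) a
    convert h using 1
    rw [smul_sub, chipEval, Finsupp.linearCombination_single, map_smul]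
    simp

open Polynomial in
theorem stmt_7 (w : (ℕ × ℕ) →₀ ℤ) :
    IsOutcome w ↔
      ∑ p ∈ w.support, C (w p) * X ^ p.1 * (1 - X) ^ p.2 = (0 : ℤ[X]) := by
  have key : ∑ p ∈ w.support, C (w p) * X ^ p.1 * (1 - X) ^ p.2 = chipEval w := by
    rw [chipEval, Finsupp.linearCombination_apply, Finsupp.sum]
    refine Finset.sum_congr rfl fun p _ => ?_
    rw [Polynomial.smul_eq_C_mul, mul_assoc]
  rw [key]
  clear key
  constructor
  · intro h
    unfold IsOutcome at h
    induction h using AddSubgroup.closure_induction with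
    | mem x hx =>
      obtain ⟨p, rfl⟩ := hx
      simp only [splitMove, map_add, map_sub, chipEval, Finsupp.linearCombination_single, one_smul]
      ring
    | zero => simp
    | add x y _ _ hx hy =>
      rw [map_add, hx, hy, add_zero]
    | neg x _ hx => rw [map_neg, hx, neg_zero]
  · intro h
    have := chip_sub_mem w
    rwa [h, map_zero, sub_zero] at this
end

section
/- Let d ∈ ℕ and let w be a chip configuration with supp(w) ⊆ V_d. Then w is a chipsplitting outcome if and only if for every Pascal coefficient system c on V_d one has ∑_{(i,j) ∈ V_d} c(i,j)·w(i,j) = 0. -/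
/-- A Pascal coefficient system on `V_d = {(i,j) : i + j ≤ d}`:
`c(i,j) = c(i+1,j) + c(i,j+1)` whenever `i + j ≤ d − 1`. -/
def IsPascal (d : ℕ) (c : ℕ × ℕ → ℤ) : Prop :=
  ∀ i j : ℕ, i + j + 1 ≤ d → c (i, j) = c (i + 1, j) + c (i, j + 1)

/-- The Pascal system with prescribed values on the column `i = 0`. -/
def pasExt (f : ℕ → ℤ) : ℕ → ℕ → ℤ
  | 0, j => f j
  | i + 1, j => pasExt f i j - pasExt f i (j + 1)

lemma pasExt_eq (d : ℕ) (c : ℕ × ℕ → ℤ) (hc : IsPascal d c) (i : ℕ) :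
    ∀ j, i + j ≤ d → pasExt (fun j => c (0, j)) i j = c (i, j) := by
  induction i with
  | zero => intro j _; rfl
  | succ i ih =>
    intro j h
    have h1 := ih j (by omega)
    have h2 := ih (j + 1) (by omega)
    have h3 := hc i j (by omega)
    simp only [pasExt]
    linarith

lemma single_red (d : ℕ) (i : ℕ) : ∀ j, i + j ≤ d →
    (Finsupp.single (i, j) 1 - ∑ k ∈ Finset.range (d + 1),
      pasExt (Pi.single k 1) i j • Finsupp.single (0, k) 1 : (ℕ × ℕ) →₀ ℤ)
      ∈ AddSubgroup.closure (Set.range splitMove) := by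
  induction i with
  | zero =>
    intro j h
    have : (∑ k ∈ Finset.range (d + 1),
      pasExt (Pi.single k 1) 0 j • Finsupp.single (0, k) 1 : (ℕ × ℕ) →₀ ℤ)
        = Finsupp.single (0, j) 1 := by
      rw [Finset.sum_eq_single j]
      · simp [pasExt]
      · intro k _ hk
        simp [pasExt, Pi.single_apply, hk.symm]
      · intro hj
        exact absurd (Finset.mem_range.2 (by omega)) hj
    rw [this, sub_self]
    exact zero_mem _
  | succ i ih =>
    intro j h
    have h1 := ih j (by omega)
    have h2 := ih (j + 1) (by omega)
    have h3 : splitMove (i, j) ∈ AddSubgroup.closure (Set.range splitMove) :=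
      AddSubgroup.subset_closure ⟨_, rfl⟩
    convert add_mem h3 (sub_mem h1 h2) using 1
    simp only [pasExt, sub_smul, Finset.sum_sub_distrib, splitMove]
    abel

theorem stmt_8 (d : ℕ) (w : (ℕ × ℕ) →₀ ℤ)
    (hsupp : ∀ p : ℕ × ℕ, w p ≠ 0 → p.1 + p.2 ≤ d) :
    IsOutcome w ↔
      ∀ c : ℕ × ℕ → ℤ, IsPascal d c →
        ∑ p ∈ (Finset.range (d + 1) ×ˢ Finset.range (d + 1)).filter
            (fun p => p.1 + p.2 ≤ d), c p * w p = 0 := by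
  set S := (Finset.range (d + 1) ×ˢ Finset.range (d + 1)).filter
            (fun p : ℕ × ℕ => p.1 + p.2 ≤ d) with hS
  have hsub : w.support ⊆ S := by
    intro p hp
    have := hsupp p (Finsupp.mem_support_iff.1 hp)
    simp only [hS, Finset.mem_filter, Finset.mem_product, Finset.mem_range]
    omega
  constructor
  · intro hw c hc
    let g : ℕ × ℕ → ℤ := fun p => pasExt (fun j => c (0, j)) p.1 p.2
    let L : ((ℕ × ℕ) →₀ ℤ) →ₗ[ℤ] ℤ := Finsupp.linearCombination ℤ g
    have hL : ∀ v ∈ AddSubgroup.closure (Set.range splitMove), L v = 0 := by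
      intro v hv
      induction hv using AddSubgroup.closure_induction with
      | mem x hx =>
        obtain ⟨⟨i, j⟩, rfl⟩ := hx
        simp [L, g, splitMove, pasExt]
      | zero => simp
      | add x y _ _ hx hy => rw [map_add, hx, hy, add_zero]
      | neg x _ hx => rw [map_neg, hx, neg_zero]
    rw [← hL w hw]
    simp only [L]
    rw [Finsupp.linearCombination_apply, Finsupp.sum_of_support_subset _ hsub _ (by simp)]
    refine Finset.sum_congr rfl fun p hp => ?_
    have hp2 : p.1 + p.2 ≤ d := (Finset.mem_filter.1 hp).2
    simp only [g]
    rw [pasExt_eq d c hc p.1 p.2 hp2, smul_eq_mul, mul_comm]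
  · intro h
    have hw : w = ∑ p ∈ S, w p • (Finsupp.single p 1 : (ℕ × ℕ) →₀ ℤ) := by
      conv_lhs => rw [← Finsupp.sum_single w]
      rw [Finsupp.sum_of_support_subset _ hsub _ (by simp)]
      simp
    have hz : ∑ p ∈ S, w p • (∑ k ∈ Finset.range (d + 1),
      pasExt (Pi.single k 1) p.1 p.2 • Finsupp.single (0, k) 1 : (ℕ × ℕ) →₀ ℤ) = 0 := by
      simp only [Finset.smul_sum, smul_smul]
      rw [Finset.sum_comm]
      refine Finset.sum_eq_zero fun k _ => ?_
      rw [← Finset.sum_smul]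
      have := h (fun p => pasExt (Pi.single k 1) p.1 p.2) (by
        intro i j _
        simp [pasExt])
      simp only [mul_comm (w _)]
      rw [this, zero_smul]
    have key : w = ∑ p ∈ S, w p • (Finsupp.single p 1 - ∑ k ∈ Finset.range (d + 1),
      pasExt (Pi.single k 1) p.1 p.2 • Finsupp.single (0, k) 1 : (ℕ × ℕ) →₀ ℤ) := by
      simp only [smul_sub, Finset.sum_sub_distrib]
      rw [hz, sub_zero]
      exact hw
    unfold IsOutcome
    rw [key]
    refine sum_mem fun p hp => zsmul_mem ?_ _
    exact single_red d p.1 p.2 (Finset.mem_filter.1 hp).2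
end

section
/- Let e ∈ ℕ and let w be a chipsplitting outcome with supp(w) ⊆ V_e, i.e., every (i,j) ∈ supp(w) satisfies i + j ≤ e. Then the alternating sum along the top diagonal vanishes: ∑_{k=0}^{e} (−1)^k·w(k, e−k) = 0. -/
/-- Coefficients of a linear functional vanishing on all splitting moves. -/
def diagCoeff (e : ℕ) (p : ℕ × ℕ) : ℤ :=
  if p.1 + p.2 < e then 0
  else (-1) ^ (p.1 + (p.1 + p.2 - e)) * (Nat.choose p.1 (p.1 + p.2 - e) : ℤ)

lemma diagCoeff_split (e i j : ℕ) :
    diagCoeff e (i + 1, j) + diagCoeff e (i, j + 1) = diagCoeff e (i, j) := by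
  unfold diagCoeff
  rcases lt_trichotomy (i + j + 1) e with h | h | h
  · simp only
    rw [if_pos (by omega), if_pos (by omega), if_pos (by omega)]
    simp
  · simp only
    rw [if_neg (by omega), if_neg (by omega), if_pos (by omega)]
    rw [show i + 1 + j - e = 0 by omega, show i + (j + 1) - e = 0 by omega]
    simp [pow_succ]
  · obtain ⟨n, hn⟩ : ∃ n, i + j = e + n := ⟨i + j - e, by omega⟩
    simp only
    rw [if_neg (by omega), if_neg (by omega), if_neg (by omega)]
    rw [show i + 1 + j - e = n + 1 by omega, show i + (j + 1) - e = n + 1 by omega,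
      show i + j - e = n by omega, Nat.choose_succ_succ]
    push_cast
    ring

lemma diagCoeff_outcome (e : ℕ) (w : (ℕ × ℕ) →₀ ℤ) (hw : IsOutcome w) :
    Finsupp.linearCombination ℤ (diagCoeff e) w = 0 := by
  unfold IsOutcome at hw
  induction hw using AddSubgroup.closure_induction with
  | mem x hx =>
    obtain ⟨⟨i, j⟩, rfl⟩ := hx
    have := diagCoeff_split e i j
    simp only [splitMove, map_add, map_sub, Finsupp.linearCombination_single, one_smul]
    linarith
  | zero => simp
  | add x y _ _ hx hy => rw [map_add, hx, hy, add_zero]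
  | neg x _ hx => rw [map_neg, hx, neg_zero]

theorem stmt_12 (e : ℕ) (w : (ℕ × ℕ) →₀ ℤ) (hw : IsOutcome w)
    (hsupp : ∀ p : ℕ × ℕ, w p ≠ 0 → p.1 + p.2 ≤ e) :
    ∑ k ∈ Finset.range (e + 1), (-1 : ℤ) ^ k * w (k, e - k) = 0 := by
  have h := diagCoeff_outcome e w hw
  rw [Finsupp.linearCombination_apply, Finsupp.sum_of_support_subset
    (s := Finset.range (e + 1) ×ˢ Finset.range (e + 1)) w _ _ (by simp),
    Finset.sum_product] at h
  · rw [← h]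
    refine Finset.sum_congr rfl fun k hk => ?_
    rw [Finset.mem_range] at hk
    rw [Finset.sum_eq_single (e - k)]
    · have h1 : k + (e - k) = e := by omega
      simp [diagCoeff, h1, mul_comm]
    · intro j _ hj
      by_cases hz : w (k, j) = 0
      · simp [hz]
      · have h2 := hsupp _ hz
        simp only at h2
        have h3 : k + j < e := by omega
        simp [diagCoeff, h3]
    · intro hn
      exact absurd (Finset.mem_range.2 (by omega)) hn
  · intro p hp
    have h2 := hsupp p (Finsupp.mem_support_iff.1 hp)
    rw [Finset.mem_product, Finset.mem_range, Finset.mem_range]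
    omega
end

section
/- Let d ∈ ℕ and let w be a chipsplitting outcome with supp(w) ⊆ V_d. Define the chip configuration w' by w'(i,j) := (−1)^{d−j}·w(j, d − i − j) for (i,j) ∈ V_d and w'(i,j) := 0 otherwise. Then w' is a chipsplitting outcome. -/
open Polynomial in
noncomputable def embX : ℤ[X] →ₗ[ℤ] ((ℕ × ℕ) →₀ ℤ) :=
  (Polynomial.basisMonomials ℤ).constr ℤ (fun n => Finsupp.single (n, 0) 1)

theorem embX_pow (n : ℕ) : embX (Polynomial.X ^ n) = Finsupp.single (n, 0) 1 := by
  have h := (Polynomial.basisMonomials ℤ).constr_basis ℤ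
    (fun n => (Finsupp.single (n, 0) 1 : (ℕ × ℕ) →₀ ℤ)) n
  rw [Polynomial.coe_basisMonomials] at h
  rw [← Polynomial.monomial_one_right_eq_X_pow]
  exact h

noncomputable def evC {R : Type*} [CommRing R] (s t : R) : ((ℕ × ℕ) →₀ ℤ) →+ R :=
  Finsupp.liftAddHom (fun p => (AddMonoidHom.mulRight (s ^ p.1 * t ^ p.2)).comp
    (Int.castAddHom R))

theorem evC_apply {R : Type*} [CommRing R] (s t : R) (w : (ℕ × ℕ) →₀ ℤ) :
    evC s t w = w.sum (fun p c => (c : R) * (s ^ p.1 * t ^ p.2)) := rfl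

theorem evC_single {R : Type*} [CommRing R] (s t : R) (p : ℕ × ℕ) (c : ℤ) :
    evC s t (Finsupp.single p c) = (c : R) * (s ^ p.1 * t ^ p.2) := by
  rw [evC_apply, Finsupp.sum_single_index]; simp

theorem evC_outcome {R : Type*} [CommRing R] (s t : R) (hst : s + t = 1)
    (w : (ℕ × ℕ) →₀ ℤ) (hw : IsOutcome w) : evC s t w = 0 := by
  have h : AddSubgroup.closure (Set.range splitMove) ≤ (evC s t).ker := by
    rw [AddSubgroup.closure_le]
    rintro _ ⟨p, rfl⟩
    show evC s t (splitMove p) = 0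
    simp only [splitMove, map_add, map_sub, evC_single]
    push_cast
    linear_combination (s ^ p.1 * t ^ p.2) * hst
  exact h hw

theorem single_emb (j : ℕ) : ∀ i : ℕ, IsOutcome (Finsupp.single (i, j) 1 -
    embX (Polynomial.X ^ i * (1 - Polynomial.X) ^ j)) := by
  induction j with
  | zero =>
    intro i
    simp only [pow_zero, mul_one, embX_pow, sub_self]
    exact zero_mem _
  | succ j ih =>
    intro i
    have h : splitMove (i, j) ∈ AddSubgroup.closure (Set.range splitMove) :=
      AddSubgroup.subset_closure ⟨_, rfl⟩
    have h2 := add_mem h (sub_mem (ih i) (ih (i + 1)))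
    unfold IsOutcome
    convert h2 using 1
    have e : (Polynomial.X ^ i * (1 - Polynomial.X) ^ (j + 1) : Polynomial ℤ) =
      Polynomial.X ^ i * (1 - Polynomial.X) ^ j
        - Polynomial.X ^ (i + 1) * (1 - Polynomial.X) ^ j := by ring
    rw [e, map_sub]
    simp only [splitMove]
    abel

theorem sub_emb (w : (ℕ × ℕ) →₀ ℤ) :
    IsOutcome (w - embX (evC Polynomial.X (1 - Polynomial.X) w)) := by
  induction w using Finsupp.induction_linear with
  | zero => simp only [map_zero, sub_zero]; exact zero_mem _
  | add f g hf hg =>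
    have := add_mem hf hg
    unfold IsOutcome
    convert this using 1
    simp only [map_add]
    abel
  | single p c =>
    have := zsmul_mem (single_emb p.2 p.1) c
    unfold IsOutcome
    convert this using 1
    rw [evC_single, smul_sub, ← map_smul, Finsupp.smul_single]
    simp

theorem map_evC {R S : Type*} [CommRing R] [CommRing S] (f : R →+* S) (s t : R)
    (w : (ℕ × ℕ) →₀ ℤ) : f (evC s t w) = evC (f s) (f t) w := by
  simp [evC_apply, Finsupp.sum, map_sum]

theorem evC_grid {R : Type*} [CommRing R] (s t : R) (d : ℕ) (w : (ℕ × ℕ) →₀ ℤ)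
    (hsupp : ∀ p : ℕ × ℕ, w p ≠ 0 → p.1 + p.2 ≤ d) :
    evC s t w = ∑ p ∈ (Finset.range (d + 1) ×ˢ Finset.range (d + 1)).filter
      (fun p => p.1 + p.2 ≤ d), (w p : R) * (s ^ p.1 * t ^ p.2) := by
  rw [evC_apply]
  apply Finsupp.sum_of_support_subset
  · intro p hp
    have := hsupp p (Finsupp.mem_support_iff.1 hp)
    simp only [Finset.mem_filter, Finset.mem_product, Finset.mem_range]
    omega
  · simp

theorem evC_flip {K : Type*} [Field K] (x : K) (hx0 : x ≠ 0) (d : ℕ) (w : (ℕ × ℕ) →₀ ℤ)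
    (hw : IsOutcome w)
    (hsupp : ∀ p : ℕ × ℕ, w p ≠ 0 → p.1 + p.2 ≤ d)
    (w' : (ℕ × ℕ) →₀ ℤ)
    (hsupp' : ∀ p : ℕ × ℕ, w' p ≠ 0 → p.1 + p.2 ≤ d)
    (hw' : ∀ p : ℕ × ℕ, w' p =
      if p.1 + p.2 ≤ d then (-1 : ℤ) ^ (d - p.2) * w (p.2, d - p.1 - p.2) else 0) :
    evC x (1 - x) w' = 0 := by
  have h0 := evC_outcome ((x - 1) / x) (1 / x) (by rw [← add_div, sub_add_cancel, div_self hx0]) w hw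
  rw [evC_grid _ _ d w hsupp] at h0
  rw [evC_grid _ _ d w' hsupp']
  have h1 := congrArg (fun z => (-1 : K) ^ d * x ^ d * z) h0
  simp only [mul_zero, Finset.mul_sum] at h1
  refine Eq.trans ?_ h1
  refine Finset.sum_nbij' (fun p => (p.2, d - p.1 - p.2)) (fun p => (d - p.1 - p.2, p.1))
    ?_ ?_ ?_ ?_ ?_
  · rintro ⟨i, j⟩ h
    simp only [Finset.mem_filter, Finset.mem_product, Finset.mem_range] at h ⊢
    omega
  · rintro ⟨i, j⟩ h
    simp only [Finset.mem_filter, Finset.mem_product, Finset.mem_range] at h ⊢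
    omega
  · rintro ⟨i, j⟩ h
    simp only [Finset.mem_filter, Finset.mem_product, Finset.mem_range, Prod.mk.injEq, and_true, true_and] at h ⊢
    omega
  · rintro ⟨i, j⟩ h
    simp only [Finset.mem_filter, Finset.mem_product, Finset.mem_range, Prod.mk.injEq, and_true, true_and] at h ⊢
    omega
  · rintro ⟨i, j⟩ h
    simp only [Finset.mem_filter, Finset.mem_product, Finset.mem_range] at h
    rw [hw', if_pos h.2]
    obtain ⟨k, rfl⟩ : ∃ k, d = i + j + k := ⟨d - i - j, by omega⟩
    have e1 : i + j + k - j = i + k := by omega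
    have e2 : i + j + k - i - j = k := by omega
    simp only [e1, e2]
    have e3 : (1 - x) ^ j = (-1) ^ j * (x - 1) ^ j := by
      rw [← mul_pow]; congr 1; ring
    have e4 : x ^ (i + j + k) * (((x - 1) / x) ^ j * (1 / x) ^ k) = x ^ i * (x - 1) ^ j := by
      rw [div_pow, div_pow, pow_add, pow_add]
      field_simp
      simp
    push_cast
    rw [e3]
    linear_combination (-(-1 : K) ^ (i + j + k) * (w (j, k) : K)) * e4

theorem stmt_13 (d : ℕ) (w : (ℕ × ℕ) →₀ ℤ) (hw : IsOutcome w)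
    (hsupp : ∀ p : ℕ × ℕ, w p ≠ 0 → p.1 + p.2 ≤ d)
    (w' : (ℕ × ℕ) →₀ ℤ)
    (hw' : ∀ p : ℕ × ℕ, w' p =
      if p.1 + p.2 ≤ d then (-1 : ℤ) ^ (d - p.2) * w (p.2, d - p.1 - p.2) else 0) :
    IsOutcome w' := by
  have hsupp' : ∀ p : ℕ × ℕ, w' p ≠ 0 → p.1 + p.2 ≤ d := by
    intro p hp
    by_contra h
    rw [hw', if_neg h] at hp
    exact hp rfl
  have key : evC (Polynomial.X : Polynomial ℤ) (1 - Polynomial.X) w' = 0 := by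
    apply IsFractionRing.injective (Polynomial ℤ) (FractionRing (Polynomial ℤ))
    rw [map_zero, map_evC, map_sub, map_one]
    refine evC_flip _ ?_ d w hw hsupp w' hsupp' hw'
    rw [Ne, IsFractionRing.to_map_eq_zero_iff]
    exact Polynomial.X_ne_zero
  have := sub_emb w'
  rwa [key, map_zero, sub_zero] at this
end

section
/- (Invertibility Criterion) Let d ∈ ℕ, let S ⊆ V_d and E ⊆ {0, …, d} be finite sets of the same cardinality, and fix an enumeration of each. Consider the pairing matrix A with rows indexed by a ∈ E and columns indexed by (i,j) ∈ S, whose (a,(i,j)) entry is the binomial coefficient C(d − i − j, a − i) (taken to be 0 when a − i < 0 or a − i > d − i − j). If A has nonzero determinant (over ℚ), then every chipsplitting outcome w with supp(w) ⊆ S is the zero configuration. -/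
/-- The functional (on points) extending the pairing row `a` to the whole grid. -/
noncomputable def phiRow (d a : ℕ) (p : ℕ × ℕ) : ℤ :=
  if p.1 ≤ a then Ring.choose ((d : ℤ) - p.1 - p.2) (a - p.1) else 0

lemma phiRow_pascal (d a i j : ℕ) :
    phiRow d a (i + 1, j) + phiRow d a (i, j + 1) - phiRow d a (i, j) = 0 := by
  unfold phiRow
  simp only
  rcases lt_trichotomy i a with h | h | h
  · obtain ⟨k, rfl⟩ : ∃ k, a = i + 1 + k := ⟨a - (i + 1), by omega⟩
    rw [if_pos (by omega), if_pos (by omega), if_pos (by omega)]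
    have e1 : i + 1 + k - (i + 1) = k := by omega
    have e2 : i + 1 + k - i = k + 1 := by omega
    rw [e1, e2]
    have := Ring.choose_succ_succ ((d : ℤ) - i - j - 1) k
    have e3 : (d : ℤ) - i - j - 1 + 1 = (d : ℤ) - i - j := by ring
    rw [e3] at this
    rw [this]
    push_cast
    have e4 : (d : ℤ) - (i + 1) - j = (d : ℤ) - i - j - 1 := by ring
    have e5 : (d : ℤ) - i - (j + 1) = (d : ℤ) - i - j - 1 := by ring
    rw [e4, e5]
    ring
  · subst h
    simp
  · rw [if_neg (by omega), if_neg (by omega), if_neg (by omega)]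
    ring

lemma phiRow_outcome (d a : ℕ) (w : (ℕ × ℕ) →₀ ℤ) (hw : IsOutcome w) :
    Finsupp.linearCombination ℤ (phiRow d a) w = 0 := by
  unfold IsOutcome at hw
  induction hw using AddSubgroup.closure_induction with
  | mem x hx =>
    obtain ⟨⟨i, j⟩, rfl⟩ := hx
    simp only [splitMove, map_add, map_sub, Finsupp.linearCombination_single, one_smul]
    exact phiRow_pascal d a i j
  | zero => simp
  | add x y _ _ hx hy => rw [map_add, hx, hy, add_zero]
  | neg x _ hx => rw [map_neg, hx, neg_zero]

/-- The Invertibility Criterion. `σ` enumerates `E ⊆ {0,…,d}` and `τ` enumerates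
`S ⊆ V_d`; the pairing matrix has entries `C(d − i − j, a − i)` (with the convention
that this is `0` when `a − i < 0`, and `Nat.choose` itself vanishes when
`a − i > d − i − j`). -/
theorem stmt_14 (d n : ℕ) (σ : Fin n → ℕ) (τ : Fin n → ℕ × ℕ)
    (hσinj : Function.Injective σ) (hτinj : Function.Injective τ)
    (hσ : ∀ a : Fin n, σ a ≤ d) (hτ : ∀ b : Fin n, (τ b).1 + (τ b).2 ≤ d)
    (hdet : Matrix.det (Matrix.of fun a b : Fin n =>
        if (τ b).1 ≤ σ a then
          (((d - (τ b).1 - (τ b).2).choose (σ a - (τ b).1) : ℕ) : ℚ)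
        else 0) ≠ 0)
    (w : (ℕ × ℕ) →₀ ℤ) (hw : IsOutcome w)
    (hsupp : ∀ p : ℕ × ℕ, w p ≠ 0 → p ∈ Set.range τ) :
    w = 0 := by
  classical
  have key := Matrix.eq_zero_of_mulVec_eq_zero hdet (v := fun b => (w (τ b) : ℚ)) (by
    funext a
    have h := phiRow_outcome d (σ a) w hw
    rw [Finsupp.linearCombination_apply, Finsupp.sum_of_support_subset
      (s := Finset.univ.image τ) _ _ _ (by simp)] at h
    · rw [Finset.sum_image (fun x _ y _ hxy => hτinj hxy)] at h
      have h2 := congrArg (Int.cast : ℤ → ℚ) h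
      simp only [Matrix.mulVec, dotProduct, Matrix.of_apply, Pi.zero_apply]
      push_cast at h2
      refine Eq.trans ?_ h2
      refine Finset.sum_congr rfl fun b _ => ?_
      rw [smul_eq_mul, Int.cast_mul, mul_comm]
      congr 1
      unfold phiRow
      split_ifs
      · have hb := hτ b
        have e : (d : ℤ) - (τ b).1 - (τ b).2 = ((d - (τ b).1 - (τ b).2 : ℕ) : ℤ) := by omega
        rw [e, Ring.choose_natCast]
        simp
      · simp
    · intro p hp
      obtain ⟨b, rfl⟩ := hsupp p (Finsupp.mem_support_iff.mp hp)
      simp)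
  ext p
  by_contra hp
  obtain ⟨b, rfl⟩ := hsupp p hp
  have := congrFun key b
  simp only [Pi.zero_apply, Int.cast_eq_zero] at this
  exact hp this
end

section
/- (Hexagon Criterion) Let d, d', ℓ₁, ℓ₂ be integers with ℓ₁ ≥ d' ≥ 1, ℓ₂ ≥ d', and d' + ℓ₁ + ℓ₂ ≤ d. Let w be a chipsplitting outcome with supp(w) ⊆ V_d such that every (i,j) ∈ supp(w) satisfies i + j ≤ d' or j > d − ℓ₁ or i > d − ℓ₂. Then: (a) the restriction w' defined by w'(i,j) := w(i,j) when i + j ≤ d' and w'(i,j) := 0 otherwise is a chipsplitting outcome; (b) if moreover w is valid, then every (i,j) ∈ supp(w) satisfies i + j ≤ d'. -/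
open Polynomial in
/-- Evaluation of a configuration at `x^i (1-x)^j`. -/
noncomputable def chipPoly : ((ℕ × ℕ) →₀ ℤ) →ₗ[ℤ] ℤ[X] :=
  Finsupp.linearCombination ℤ (fun p : ℕ × ℕ => (X : ℤ[X]) ^ p.1 * (1 - X) ^ p.2)

open Polynomial in
/-- Embedding of polynomials as configurations on the bottom row. -/
noncomputable def rowEmb : ℤ[X] →ₗ[ℤ] ((ℕ × ℕ) →₀ ℤ) :=
  (Polynomial.basisMonomials ℤ).constr ℤ (fun i => Finsupp.single (i, 0) (1 : ℤ))

open Polynomial in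
theorem rowEmb_X_pow (i : ℕ) : rowEmb (X ^ i) = Finsupp.single (i, 0) (1 : ℤ) := by
  have := (Polynomial.basisMonomials ℤ).constr_basis ℤ
    (fun i : ℕ => (Finsupp.single (i, 0) (1 : ℤ) : (ℕ × ℕ) →₀ ℤ)) i
  simp only [Polynomial.coe_basisMonomials, Polynomial.monomial_one_right_eq_X_pow] at this
  exact this

open Polynomial in
theorem chipPoly_single (p : ℕ × ℕ) (a : ℤ) :
    chipPoly (Finsupp.single p a) = a • ((X : ℤ[X]) ^ p.1 * (1 - X) ^ p.2) := by
  simp [chipPoly]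

theorem chipPoly_of_outcome (w : (ℕ × ℕ) →₀ ℤ) (hw : IsOutcome w) : chipPoly w = 0 := by
  unfold IsOutcome at hw
  induction hw using AddSubgroup.closure_induction with
  | mem x hx =>
    obtain ⟨p, rfl⟩ := hx
    simp only [splitMove, map_add, map_sub, chipPoly_single, one_smul]
    ring
  | zero => simp
  | add x y _ _ hx hy => simp [hx, hy]
  | neg x _ hx => simp [hx]

open Polynomial in
theorem single_sub_rowEmb (j : ℕ) : ∀ i : ℕ,
    IsOutcome (Finsupp.single (i, j) (1 : ℤ) - rowEmb ((X : ℤ[X]) ^ i * (1 - X) ^ j)) := by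
  induction j with
  | zero =>
    intro i
    simp only [pow_zero, mul_one, rowEmb_X_pow, sub_self]
    exact AddSubgroup.zero_mem _
  | succ j ih =>
    intro i
    have e : (X : ℤ[X]) ^ i * (1 - X) ^ (j + 1)
        = X ^ i * (1 - X) ^ j - X ^ (i + 1) * (1 - X) ^ j := by ring
    have h : IsOutcome (splitMove (i, j)) := AddSubgroup.subset_closure ⟨_, rfl⟩
    have := AddSubgroup.add_mem _ h (AddSubgroup.sub_mem _ (ih i) (ih (i + 1)))
    unfold IsOutcome
    convert this using 1
    rw [e, map_sub, splitMove]
    abel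

theorem sub_rowEmb (w : (ℕ × ℕ) →₀ ℤ) : IsOutcome (w - rowEmb (chipPoly w)) := by
  induction w using Finsupp.induction_linear with
  | zero => simpa [IsOutcome] using AddSubgroup.zero_mem (AddSubgroup.closure (Set.range splitMove))
  | add f g hf hg =>
    have := AddSubgroup.add_mem _ hf hg
    unfold IsOutcome
    convert this using 1
    simp only [map_add]
    abel
  | single p a =>
    have := AddSubgroup.zsmul_mem _ (single_sub_rowEmb p.2 p.1) a
    unfold IsOutcome
    convert this using 1
    rw [chipPoly_single, map_smul, smul_sub]
    simp

theorem outcome_of_chipPoly (w : (ℕ × ℕ) →₀ ℤ) (hw : chipPoly w = 0) : IsOutcome w := by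
  simpa [hw] using sub_rowEmb w

open Polynomial in
theorem dvd_chipPoly (w : (ℕ × ℕ) →₀ ℤ) (q : ℤ[X])
    (h : ∀ p, w p ≠ 0 → q ∣ (X : ℤ[X]) ^ p.1 * (1 - X) ^ p.2) : q ∣ chipPoly w := by
  rw [chipPoly, Finsupp.linearCombination_apply]
  exact Finset.dvd_sum fun p hp => by
    beta_reduce
    rw [zsmul_eq_mul]
    exact Dvd.dvd.mul_left (h p (by simpa using hp)) _

open Polynomial in
theorem natDegree_one_sub_X_pow (m : ℕ) : ((1 - X : ℤ[X]) ^ m).natDegree = m := by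
  have h : (1 - X : ℤ[X]).natDegree = 1 := by
    have : (1 - X : ℤ[X]) = -(X - C 1) := by simp
    rw [this, natDegree_neg, natDegree_X_sub_C]
  rw [natDegree_pow, h, mul_one]

open Polynomial in
theorem natDegree_chipPoly (w : (ℕ × ℕ) →₀ ℤ) (k : ℕ)
    (h : ∀ p, w p ≠ 0 → p.1 + p.2 ≤ k) : (chipPoly w).natDegree ≤ k := by
  rw [chipPoly, Finsupp.linearCombination_apply]
  refine natDegree_sum_le_of_forall_le _ _ fun p hp => ?_
  refine (natDegree_smul_le _ _).trans (natDegree_mul_le.trans ?_)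
  rw [natDegree_X_pow, natDegree_one_sub_X_pow]
  exact h p (by simpa using hp)

theorem eq_zero_of_nonneg (w : (ℕ × ℕ) →₀ ℤ) (h0 : ∀ p, 0 ≤ w p) (h : chipPoly w = 0)
    (p : ℕ × ℕ) : w p = 0 := by
  have h2 := congrArg (Polynomial.aeval (1 / 2 : ℚ)) h
  rw [chipPoly, Finsupp.linearCombination_apply, Finsupp.sum, map_sum, map_zero,
    Finset.sum_eq_zero_iff_of_nonneg] at h2
  · by_contra hp
    have h3 := h2 p (by simpa using hp)
    simp only [map_zsmul, map_mul, map_pow, map_sub, map_one, Polynomial.aeval_X,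
      zsmul_eq_mul] at h3
    have : (w p : ℚ) ≠ 0 := by exact_mod_cast hp
    norm_num at h3
    exact hp h3
  · intro q _
    have : (0 : ℚ) ≤ w q := by exact_mod_cast h0 q
    simp only [map_zsmul, map_mul, map_pow, map_sub, map_one, Polynomial.aeval_X,
      zsmul_eq_mul]
    norm_num
    positivity

open Polynomial in
theorem poly_key (A B C : ℤ[X]) (d k m n : ℕ) (hkn : k ≤ n) (hkm : k ≤ m)
    (hd : d + k < m + n) (hkd : k ≤ d) (hA : A.natDegree < k) (hB : (1 - X) ^ m ∣ B)
    (hC : X ^ n ∣ C) (hCd : C.natDegree ≤ d) (h : A + B + C = 0) :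
    A = 0 ∧ B = 0 ∧ C = 0 := by
  have hC0 : C = 0 := by
    have e : derivative^[k] B + derivative^[k] C = 0 := by
      have := congrArg (derivative^[k]) h
      rw [iterate_map_add, iterate_map_add, iterate_derivative_eq_zero hA,
        iterate_derivative_zero, zero_add] at this
      exact this
    have d1 : X ^ (n - k) ∣ derivative^[k] C := pow_sub_dvd_iterate_derivative_of_pow_dvd _ hC
    have d2 : (1 - X) ^ (m - k) ∣ derivative^[k] C := by
      have := pow_sub_dvd_iterate_derivative_of_pow_dvd k hB
      rw [eq_neg_of_add_eq_zero_left e] at this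
      exact (dvd_neg).1 this
    have cop : IsCoprime ((X : ℤ[X]) ^ (n - k)) ((1 - X) ^ (m - k)) :=
      IsCoprime.pow ⟨1, 1, by ring⟩
    have d3 := cop.mul_dvd d1 d2
    have hz : derivative^[k] C = 0 := by
      by_contra hne
      have h1 := natDegree_le_of_dvd d3 hne
      have h2 := natDegree_iterate_derivative C k
      have hx : (1 - X : ℤ[X]) ^ (m - k) ≠ 0 := by
        intro h0
        rw [h0] at d2
        exact hne (zero_dvd_iff.1 d2)
      rw [natDegree_mul (pow_ne_zero _ X_ne_zero) hx, natDegree_X_pow,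
        natDegree_one_sub_X_pow] at h1
      omega
    ext i
    rw [coeff_zero]
    by_cases hi : i < n
    · exact (X_pow_dvd_iff.1 hC) i hi
    · have h3 := congrArg (fun f => coeff f (i - k)) hz
      simp only [coeff_iterate_derivative, coeff_zero] at h3
      rw [Nat.sub_add_cancel (by omega)] at h3
      rcases smul_eq_zero.1 h3 with h4 | h4
      · rw [Nat.descFactorial_eq_zero_iff_lt] at h4
        omega
      · exact h4
  have hA0 : A = 0 := by
    by_contra hne
    have : (1 - X) ^ m ∣ A := by
      have e : A = -B := by
        rw [hC0, add_zero] at h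
        exact eq_neg_of_add_eq_zero_left h
      rw [e]
      exact (dvd_neg).2 hB
    have := natDegree_le_of_dvd this hne
    rw [natDegree_one_sub_X_pow] at this
    omega
  refine ⟨hA0, ?_, hC0⟩
  simpa [hA0, hC0] using h

/-- The Hexagon Criterion. -/
theorem stmt_15 (d d' l₁ l₂ : ℕ) (hd' : 1 ≤ d') (h₁ : d' ≤ l₁) (h₂ : d' ≤ l₂)
    (hsum : d' + l₁ + l₂ ≤ d)
    (w : (ℕ × ℕ) →₀ ℤ) (hw : IsOutcome w)
    (hsupp : ∀ p : ℕ × ℕ, w p ≠ 0 → p.1 + p.2 ≤ d)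
    (hhex : ∀ p : ℕ × ℕ, w p ≠ 0 →
      p.1 + p.2 ≤ d' ∨ d - l₁ < p.2 ∨ d - l₂ < p.1) :
    (∀ w' : (ℕ × ℕ) →₀ ℤ,
      (∀ p : ℕ × ℕ, w' p = if p.1 + p.2 ≤ d' then w p else 0) → IsOutcome w') ∧
    (IsValid w → ∀ p : ℕ × ℕ, w p ≠ 0 → p.1 + p.2 ≤ d') := by
  classical
  set A := w.filter (fun p => p.1 + p.2 ≤ d') with hA
  set B := w.filter (fun p => d - l₁ < p.2) with hB
  set C := w.filter (fun p => d - l₂ < p.1) with hC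
  have hsplit : A + B + C = w := by
    ext p
    simp only [hA, hB, hC, Finsupp.add_apply, Finsupp.filter_apply]
    by_cases hp : w p = 0
    · simp [hp]
    · have a1 := hsupp p hp
      have a2 := hhex p hp
      split_ifs <;> first | omega | simp
  have key := poly_key (chipPoly A) (chipPoly B) (chipPoly C) d (d' + 1) (d - l₁ + 1)
    (d - l₂ + 1) (by omega) (by omega) (by omega) (by omega)
    (Nat.lt_succ_of_le (natDegree_chipPoly _ _ fun p hp => by
      by_contra hn
      exact hp (by simp [hA, Finsupp.filter_apply, hn])))
    (dvd_chipPoly _ _ fun p hp => by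
      have : d - l₁ < p.2 := by
        by_contra hn
        exact hp (by simp only [hB, Finsupp.filter_apply, if_neg hn])
      exact Dvd.dvd.mul_left (pow_dvd_pow _ this) _)
    (dvd_chipPoly _ _ fun p hp => by
      have : d - l₂ < p.1 := by
        by_contra hn
        exact hp (by simp only [hC, Finsupp.filter_apply, if_neg hn])
      exact Dvd.dvd.mul_right (pow_dvd_pow _ this) _)
    (natDegree_chipPoly _ _ fun p hp => hsupp p (by
      intro h0
      exact hp (by simp [hC, Finsupp.filter_apply, h0])))
    (by rw [← map_add, ← map_add, hsplit, chipPoly_of_outcome w hw])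
  obtain ⟨kA, kB, kC⟩ := key
  refine ⟨fun w' hw' => ?_, fun hv p hp => ?_⟩
  · have : w' = A := by
      ext p
      rw [hw', hA, Finsupp.filter_apply]
    rw [this]
    exact outcome_of_chipPoly _ kA
  · have pos : ∀ q : ℕ × ℕ, (0 < q.1 ∨ 0 < q.2) → 0 ≤ w q := by
      intro q hq
      by_contra hn
      have := hv q (not_le.1 hn)
      subst this
      simp at hq
    have zB := eq_zero_of_nonneg B (fun q => by
      rw [hB, Finsupp.filter_apply]
      split_ifs with hq
      · exact pos q (Or.inr (by omega))
      · exact le_rfl) kB p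
    have zC := eq_zero_of_nonneg C (fun q => by
      rw [hC, Finsupp.filter_apply]
      split_ifs with hq
      · exact pos q (Or.inl (by omega))
      · exact le_rfl) kC p
    rw [hB, Finsupp.filter_apply] at zB
    rw [hC, Finsupp.filter_apply] at zC
    rcases hhex p hp with h | h | h
    · exact h
    · rw [if_pos h] at zB
      exact absurd zB hp
    · rw [if_pos h] at zC
      exact absurd zC hp
end

section
/- For every integer k ≥ 0 and every real number t, the identity t^{2k+1} + ∑_{i=0}^{k} ((2k+1)/(2i+1))·C(k+i, 2i)·t^{k−i}·(1−t)^{2i+1} = 1 holds, where C(k+i, 2i) is the binomial coefficient. -/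
noncomputable def auxP (t : ℝ) (k : ℕ) : ℝ :=
  ∑ i ∈ Finset.range (k + 1), ((k + i).choose (2 * i) : ℝ) * t ^ (k - i) * (1 - t) ^ (2 * i)

noncomputable def auxQ (t : ℝ) (k : ℕ) : ℝ :=
  ∑ i ∈ Finset.range k, ((k + i).choose (2 * i + 1) : ℝ) * t ^ (k - 1 - i) * (1 - t) ^ (2 * i + 1)

lemma tauxQ (t : ℝ) (k : ℕ) : t * auxQ t k = ∑ i ∈ Finset.range (k + 1),
    ((k + i).choose (2 * i + 1) : ℝ) * t ^ (k - i) * (1 - t) ^ (2 * i + 1) := by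
  rw [Finset.sum_range_succ, Nat.choose_eq_zero_of_lt (by omega : k + k < 2 * k + 1), auxQ,
    Finset.mul_sum]
  simp only [Nat.cast_zero, zero_mul, add_zero]
  refine Finset.sum_congr rfl fun i hi => ?_
  have hi' := Finset.mem_range.1 hi
  rw [show k - i = (k - 1 - i) + 1 by omega]
  ring

lemma auxQ_succ (t : ℝ) (k : ℕ) : auxQ t (k + 1) = (1 - t) * auxP t k + t * auxQ t k := by
  rw [tauxQ, auxP, Finset.mul_sum, ← Finset.sum_add_distrib, auxQ]
  refine Finset.sum_congr rfl fun i hi => ?_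
  rw [show k + 1 + i = (k + i) + 1 by omega, Nat.choose_succ_succ, Nat.add_sub_cancel]
  push_cast
  ring

lemma auxP_succ (t : ℝ) (k : ℕ) : auxP t (k + 1) = t * auxP t k + (1 - t) * auxQ t (k + 1) := by
  have h : t * auxP t k = ∑ i ∈ Finset.range (k + 2),
      ((k + i).choose (2 * i) : ℝ) * t ^ (k + 1 - i) * (1 - t) ^ (2 * i) := by
    rw [Finset.sum_range_succ,
      Nat.choose_eq_zero_of_lt (by omega : k + (k + 1) < 2 * (k + 1)), auxP, Finset.mul_sum]
    simp only [Nat.cast_zero, zero_mul, add_zero]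
    refine Finset.sum_congr rfl fun i hi => ?_
    have hi' := Finset.mem_range.1 hi
    rw [show k + 1 - i = (k - i) + 1 by omega]
    ring
  rw [h, auxP, Finset.sum_range_succ', Finset.sum_range_succ' _ (k + 1), auxQ, Finset.mul_sum,
    add_right_comm (∑ i ∈ Finset.range (k + 1), _), ← Finset.sum_add_distrib]
  congr 1
  · refine Finset.sum_congr rfl fun i hi => ?_
    rw [show k + 1 + (i + 1) = (k + 1 + i) + 1 by omega,
      show 2 * (i + 1) = (2 * i + 1) + 1 by omega, Nat.choose_succ_succ,
      show k + (i + 1) = k + 1 + i by omega, show k + 1 - (i + 1) = k + 1 - 1 - i by omega]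
    push_cast
    ring
  · simp

lemma aux_inv (t : ℝ) (k : ℕ) :
    auxP t k - auxQ t k = t ^ (2 * k) ∧ auxP t k + t * auxQ t k = 1 := by
  induction k with
  | zero => simp [auxP, auxQ]
  | succ k ih =>
    obtain ⟨h1, h2⟩ := ih
    rw [auxP_succ, auxQ_succ]
    constructor
    · rw [show 2 * (k + 1) = 2 * k + 2 by ring, pow_add, ← h1]; ring
    · linear_combination h2

theorem stmt_16 (k : ℕ) (t : ℝ) :
    t ^ (2 * k + 1) + ∑ i ∈ Finset.range (k + 1),
      ((2 * k + 1 : ℝ) / (2 * i + 1)) * ((k + i).choose (2 * i) : ℝ)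
        * t ^ (k - i) * (1 - t) ^ (2 * i + 1) = 1 := by
  have key : ∑ i ∈ Finset.range (k + 1),
      ((2 * k + 1 : ℝ) / (2 * i + 1)) * ((k + i).choose (2 * i) : ℝ)
        * t ^ (k - i) * (1 - t) ^ (2 * i + 1) = (1 - t) * auxP t k + 2 * (t * auxQ t k) := by
    rw [tauxQ, auxP, Finset.mul_sum, Finset.mul_sum, ← Finset.sum_add_distrib]
    refine Finset.sum_congr rfl fun i hi => ?_
    have hi' : i ≤ k := by have := Finset.mem_range.1 hi; omega
    have hc := Nat.choose_succ_right_eq (k + i) (2 * i)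
    rw [show k + i - 2 * i = k - i by omega] at hc
    have hc' : ((k + i).choose (2 * i + 1) : ℝ) * (2 * i + 1)
        = ((k + i).choose (2 * i) : ℝ) * (k - i) := by
      rw [← Nat.cast_sub hi']; exact_mod_cast hc
    have hp : (2 * i + 1 : ℝ) ≠ 0 := by positivity
    have : ((2 * k + 1 : ℝ) / (2 * i + 1)) * ((k + i).choose (2 * i) : ℝ)
        = ((k + i).choose (2 * i) : ℝ) + 2 * ((k + i).choose (2 * i + 1) : ℝ) := by
      rw [div_mul_eq_mul_div, div_eq_iff hp]
      linear_combination -2 * hc'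
    rw [this]
    ring
  obtain ⟨h1, h2⟩ := aux_inv t k
  rw [key, pow_succ, ← h1]
  linear_combination h2
end

section
/- Let k ≥ 0 be an integer and define the finitely supported function w : ℕ × ℕ → ℚ by w(0,0) := −1, w(2k+1, 0) := 1, w(k−i, 2i+1) := ((2k+1)/(2i+1))·C(k+i, 2i) for each 0 ≤ i ≤ k, and w(i,j) := 0 at all other points. Then w is a valid rational chipsplitting outcome; moreover its degree is 2k+1 and its positive support has exactly k+2 elements. -/
/-- The splitting-move vector at a grid point `p = (i,j)`, with rational entries:
`δ_{(i+1,j)} + δ_{(i,j+1)} − δ_{(i,j)}`. -/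
noncomputable def splitMoveQ (p : ℕ × ℕ) : (ℕ × ℕ) →₀ ℚ :=
  Finsupp.single (p.1 + 1, p.2) 1 + Finsupp.single (p.1, p.2 + 1) 1 - Finsupp.single p 1

/-- A rational chip configuration is a rational chipsplitting outcome if it lies in
the ℚ-linear span of the splitting-move vectors. -/
def IsOutcomeQ (w : (ℕ × ℕ) →₀ ℚ) : Prop :=
  w ∈ Submodule.span ℚ (Set.range splitMoveQ)

open Polynomial in
/-- The linear map `X^i ↦ [δ_(i,0)]` into the quotient by the span of the moves. -/
noncomputable def liftQuot :
    ℚ[X] →ₗ[ℚ] ((ℕ × ℕ) →₀ ℚ) ⧸ Submodule.span ℚ (Set.range splitMoveQ) :=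
  (Polynomial.basisMonomials ℚ).constr ℚ
    (fun i => Submodule.Quotient.mk (Finsupp.single (i, 0) 1))

open Polynomial in
lemma liftQuot_apply (j i : ℕ) : liftQuot (X ^ i * (1 - X) ^ j) =
    Submodule.Quotient.mk (Finsupp.single (i, j) 1) := by
  induction j generalizing i with
  | zero =>
    have h := (Polynomial.basisMonomials ℚ).constr_basis ℚ
      (fun i => (Submodule.Quotient.mk (Finsupp.single (i, 0) 1) :
        ((ℕ × ℕ) →₀ ℚ) ⧸ Submodule.span ℚ (Set.range splitMoveQ))) i
    rw [Polynomial.coe_basisMonomials] at h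
    simpa [liftQuot, Polynomial.X_pow_eq_monomial] using h
  | succ j ih =>
    have h : (X ^ i * (1 - X) ^ (j + 1) : ℚ[X])
        = X ^ i * (1 - X) ^ j - X ^ (i + 1) * (1 - X) ^ j := by ring
    rw [h, map_sub, ih, ih, ← Submodule.Quotient.mk_sub, eq_comm, Submodule.Quotient.eq]
    refine Submodule.subset_span ⟨(i, j), ?_⟩
    simp only [splitMoveQ]
    abel

open Polynomial in
lemma outcome_of_poly (w : (ℕ × ℕ) →₀ ℚ)
    (h : w.sum (fun p c => c • (X ^ p.1 * (1 - X) ^ p.2 : ℚ[X])) = 0) : IsOutcomeQ w := by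
  unfold IsOutcomeQ
  rw [← Submodule.Quotient.mk_eq_zero]
  have h2 := congrArg liftQuot h
  rw [map_zero, map_finsuppSum] at h2
  simp only [map_smul, liftQuot_apply] at h2
  rw [← h2]
  conv_lhs => rw [← Finsupp.sum_single w]
  rw [← Submodule.mkQ_apply, map_finsuppSum]
  refine Finsupp.sum_congr fun p _ => ?_
  rw [Submodule.mkQ_apply, ← Submodule.Quotient.mk_smul]
  simp

/-- Integer form of the coefficients. -/
def coefD (k i : ℕ) : ℚ := ((k + i).choose (2 * i) : ℚ) + 2 * ((k + i).choose (2 * i + 1) : ℚ)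

lemma coefD_eq (k i : ℕ) (h : i ≤ k) :
    ((2 * k + 1 : ℚ) / (2 * i + 1)) * ((k + i).choose (2 * i) : ℚ) = coefD k i := by
  have h1 := Nat.choose_succ_right_eq (k + i) (2 * i)
  have h2 : k + i - 2 * i = k - i := by omega
  rw [h2] at h1
  have h3 : ((k + i).choose (2 * i + 1) : ℚ) * (2 * i + 1)
      = (k + i).choose (2 * i) * ((k : ℚ) - i) := by
    rw [← Nat.cast_sub h]; exact_mod_cast h1
  have h4 : (2 * i + 1 : ℚ) ≠ 0 := by positivity
  unfold coefD
  field_simp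
  linear_combination (-2) * h3

lemma coefD_zero (k : ℕ) : coefD k 0 = 2 * k + 1 := by
  simp [coefD]; ring

lemma coefD_big (k i : ℕ) (h : k < i) : coefD k i = 0 := by
  unfold coefD
  rw [Nat.choose_eq_zero_of_lt (by omega), Nat.choose_eq_zero_of_lt (by omega)]
  simp

lemma choose_rec (n m : ℕ) : ((n + 2).choose (m + 2) : ℚ)
    = n.choose m + 2 * (n + 1).choose (m + 2) - n.choose (m + 2) := by
  have h1 : ((n + 2).choose (m + 2) : ℚ) = (n + 1).choose (m + 1) + (n + 1).choose (m + 2) := by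
    exact_mod_cast Nat.choose_succ_succ (n + 1) (m + 1)
  have h2 : ((n + 1).choose (m + 2) : ℚ) = n.choose (m + 1) + n.choose (m + 2) := by
    exact_mod_cast Nat.choose_succ_succ n (m + 1)
  have h3 : ((n + 1).choose (m + 1) : ℚ) = n.choose m + n.choose (m + 1) := by
    exact_mod_cast Nat.choose_succ_succ n m
  linarith

lemma coefD_rec (k i : ℕ) :
    coefD (k + 2) (i + 1) = coefD (k + 1) i + 2 * coefD (k + 1) (i + 1) - coefD k (i + 1) := by
  have h1 := choose_rec (k + i + 1) (2 * i)
  have h2 := choose_rec (k + i + 1) (2 * i + 1)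
  unfold coefD
  rw [show k + 2 + (i + 1) = k + i + 1 + 2 by ring, show k + 1 + i = k + i + 1 by ring,
    show k + 1 + (i + 1) = k + i + 1 + 1 by ring, show k + (i + 1) = k + i + 1 by ring,
    show 2 * (i + 1) = 2 * i + 2 by ring, show 2 * i + 2 + 1 = 2 * i + 1 + 2 by ring]
  linarith

open Polynomial in
/-- The non-top part of the polynomial. -/
noncomputable def polyF (k : ℕ) : ℚ[X] :=
  ∑ i ∈ Finset.range (k + 1), C (coefD k i) * (X ^ (k - i) * (1 - X) ^ (2 * i + 1))

open Polynomial in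
lemma polyF_ext (k N : ℕ) (h : k + 1 ≤ N) : polyF k =
    ∑ i ∈ Finset.range N, C (coefD k i) * (X ^ (k - i) * (1 - X) ^ (2 * i + 1)) := by
  unfold polyF
  refine Finset.sum_subset (by simpa using h) fun i _ hi => ?_
  rw [coefD_big k i (by simpa using hi)]
  simp

open Polynomial in
lemma polyF_mul (k N a : ℕ) (h : k + 1 ≤ N) : X ^ a * polyF k =
    ∑ i ∈ Finset.range N, C (coefD k i) * (X ^ (k + a - i) * (1 - X) ^ (2 * i + 1)) := by
  rw [polyF_ext k N h, Finset.mul_sum]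
  refine Finset.sum_congr rfl fun i _ => ?_
  by_cases hi : k < i
  · rw [coefD_big k i hi]; simp
  · rw [show k + a - i = (k - i) + a by omega, pow_add]; ring

open Polynomial in
lemma polyF_rec (k : ℕ) :
    polyF (k + 2) = ((1 - X) ^ 2 + 2 * X) * polyF (k + 1) - X ^ 2 * polyF k := by
  have h1 := polyF_mul (k + 1) (k + 3) 1 (by omega)
  have h2 := polyF_mul k (k + 3) 2 (by omega)
  have h3 : (1 - X) ^ 2 * polyF (k + 1) = ∑ i ∈ Finset.range (k + 2),
      C (coefD (k + 1) i) * (X ^ (k + 2 - (i + 1)) * (1 - X) ^ (2 * (i + 1) + 1)) := by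
    unfold polyF
    rw [Finset.mul_sum]
    refine Finset.sum_congr rfl fun i _ => ?_
    rw [show k + 2 - (i + 1) = k + 1 - i by omega]
    ring
  rw [pow_one] at h1
  have h4 : ((1 - X) ^ 2 + 2 * X) * polyF (k + 1) - X ^ 2 * polyF k
    = (1 - X) ^ 2 * polyF (k + 1) + 2 * (X * polyF (k + 1)) - X ^ 2 * polyF k := by ring
  rw [h4, h1, h2, h3, polyF, Finset.sum_range_succ' _ (k + 2), Finset.sum_range_succ' _ (k + 2),
    Finset.sum_range_succ' _ (k + 2)]
  simp only [coefD_rec, C_add, C_sub, C_mul, add_mul, sub_mul, Finset.sum_add_distrib,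
    Finset.sum_sub_distrib, mul_assoc, ← Finset.mul_sum, coefD_zero]
  have e : (C 2 : ℚ[X]) = 2 := rfl
  simp only [Nat.cast_add, Nat.cast_one, Nat.cast_ofNat, C_add, C_mul, e, map_one]
  ring

open Polynomial in
lemma polyF_eq (k : ℕ) : polyF k = 1 - X ^ (2 * k + 1) ∧
    polyF (k + 1) = 1 - X ^ (2 * (k + 1) + 1) := by
  induction k with
  | zero =>
    have e : (C 2 : ℚ[X]) = 2 := rfl
    constructor
    · simp [polyF, coefD]
    · simp [polyF, coefD, Finset.sum_range_succ]
      rw [e]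
      ring
  | succ k ih =>
    refine ⟨ih.2, ?_⟩
    rw [polyF_rec, ih.1, ih.2]
    ring

theorem stmt_17 (k : ℕ) (w : (ℕ × ℕ) →₀ ℚ)
    (h00 : w (0, 0) = -1)
    (htop : w (2 * k + 1, 0) = 1)
    (hrow : ∀ i : ℕ, i ≤ k → w (k - i, 2 * i + 1)
      = ((2 * k + 1 : ℚ) / (2 * i + 1)) * ((k + i).choose (2 * i) : ℚ))
    (hzero : ∀ p : ℕ × ℕ, p ≠ (0, 0) → p ≠ (2 * k + 1, 0) →
      (∀ i : ℕ, i ≤ k → p ≠ (k - i, 2 * i + 1)) → w p = 0) :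
    IsOutcomeQ w ∧
    (∀ p : ℕ × ℕ, w p < 0 → p = (0, 0)) ∧
    (∀ p : ℕ × ℕ, w p ≠ 0 → p.1 + p.2 ≤ 2 * k + 1) ∧
    (∃ p : ℕ × ℕ, w p ≠ 0 ∧ p.1 + p.2 = 2 * k + 1) ∧
    {p : ℕ × ℕ | 0 < w p}.ncard = k + 2 := by
  set f : ℕ → ℕ × ℕ := fun i => (k - i, 2 * i + 1) with hf
  set R : Finset (ℕ × ℕ) := (Finset.range (k + 1)).image f with hR
  have hfinj : Function.Injective f := by
    intro a b hab
    simp only [hf, Prod.mk.injEq] at hab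
    omega
  have hw : ∀ i, i ≤ k → w (f i) = coefD k i := fun i hi => by
    rw [← coefD_eq k i hi]; exact hrow i hi
  have hpos : ∀ i, i ≤ k → 0 < w (f i) := fun i hi => by
    have h := hrow i hi
    have h2 : 0 < (k + i).choose (2 * i) := Nat.choose_pos (by omega)
    change 0 < w (k - i, 2 * i + 1)
    rw [h]
    positivity
  have ht : (2 * k + 1, 0) ∉ R := by simp [hR, hf]
  have h0 : ((0, 0) : ℕ × ℕ) ∉ insert (2 * k + 1, 0) R := by simp [hR, hf]
  have hcase : ∀ p, w p ≠ 0 → p = (0, 0) ∨ p = (2 * k + 1, 0) ∨ ∃ i, i ≤ k ∧ p = f i := by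
    intro p hp
    by_contra! hc
    exact hp (hzero p hc.1 hc.2.1 hc.2.2)
  refine ⟨?_, ?_, ?_, ⟨(2 * k + 1, 0), by rw [htop]; exact one_ne_zero, rfl⟩, ?_⟩
  · apply outcome_of_poly
    rw [Finsupp.sum_of_support_subset w (s := insert (0, 0) (insert (2 * k + 1, 0) R)) _ _
      (by simp)]
    · rw [Finset.sum_insert h0, Finset.sum_insert ht, hR, Finset.sum_image hfinj.injOn]
      have h := (polyF_eq k).1
      have h2 : ∑ i ∈ Finset.range (k + 1), w (f i) •
          (Polynomial.X ^ (f i).1 * (1 - Polynomial.X) ^ (f i).2 : Polynomial ℚ) = polyF k := by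
        refine Finset.sum_congr rfl fun i hi => ?_
        rw [hw i (by simpa [Nat.lt_succ_iff] using hi), Polynomial.smul_eq_C_mul]
      rw [h2, h, h00, htop]
      simp
    · intro p hp
      rcases hcase p (by simpa using hp) with h | h | ⟨i, hi, h⟩
      · simp [h]
      · simp [h]
      · simp only [Finset.mem_insert, hR, Finset.mem_image, Finset.mem_range]
        exact Or.inr (Or.inr ⟨i, by omega, h.symm⟩)
  · intro p hp
    rcases hcase p hp.ne with h | h | ⟨i, hi, h⟩
    · exact h
    · rw [h, htop] at hp; norm_num at hp
    · rw [h] at hp; exact absurd hp (hpos i hi).not_gt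
  · intro p hp
    rcases hcase p hp with h | h | ⟨i, hi, h⟩
    · simp [h]
    · simp [h]
    · simp only [h, hf]; omega
  · have hS : {p : ℕ × ℕ | 0 < w p} = ((insert (2 * k + 1, 0) R : Finset (ℕ × ℕ)) : Set (ℕ × ℕ)) := by
      ext p
      simp only [Set.mem_setOf_eq, Finset.mem_coe, Finset.mem_insert, hR, Finset.mem_image,
        Finset.mem_range]
      constructor
      · intro hp
        rcases hcase p hp.ne' with h | h | ⟨i, hi, h⟩
        · rw [h, h00] at hp; norm_num at hp
        · exact Or.inl h
        · exact Or.inr ⟨i, by omega, h.symm⟩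
      · rintro (h | ⟨i, hi, h⟩)
        · rw [h, htop]; norm_num
        · rw [← h]; exact hpos i (by omega)
    rw [hS, Set.ncard_coe_finset, Finset.card_insert_of_notMem ht, hR,
      Finset.card_image_of_injective _ hfinj, Finset.card_range]
end

section
/- Every reduced model is a convex combination of finitely many fundamental reduced models supported inside its own support: if f is a reduced model, then there exist m ≥ 1, fundamental reduced models f₁, …, f_m with supp(f_k) ⊆ supp(f) for all k, and real numbers μ₁, …, μ_m > 0 with μ₁ + ⋯ + μ_m = 1, such that f = μ₁·f₁ + ⋯ + μ_m·f_m. -/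
/-- A reduced model: a finitely supported nonnegative function `f` on the grid with
`f(0,0) = 0` whose associated combination of `t^i (1−t)^j` is identically `1`. -/
def IsReducedModel (f : (ℕ × ℕ) →₀ ℝ) : Prop :=
  (∀ p : ℕ × ℕ, 0 ≤ f p) ∧ f (0, 0) = 0 ∧
    ∀ t : ℝ, ∑ p ∈ f.support, f p * t ^ p.1 * (1 - t) ^ p.2 = 1

/-- A reduced model `f` is fundamental if any finitely supported function supported
inside `supp(f)` whose associated combination is identically `1` equals `f`. -/
def IsFundamentalRM (f : (ℕ × ℕ) →₀ ℝ) : Prop :=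
  IsReducedModel f ∧
    ∀ g : (ℕ × ℕ) →₀ ℝ, g.support ⊆ f.support →
      (∀ t : ℝ, ∑ p ∈ g.support, g p * t ^ p.1 * (1 - t) ^ p.2 = 1) → g = f

/-- Evaluation of the associated combination at `t`, as a linear map. -/
noncomputable def evalRM (t : ℝ) : ((ℕ × ℕ) →₀ ℝ) →ₗ[ℝ] ℝ :=
  Finsupp.linearCombination ℝ (fun p : ℕ × ℕ => t ^ p.1 * (1 - t) ^ p.2)

lemma evalRM_eq (t : ℝ) (f : (ℕ × ℕ) →₀ ℝ) :
    evalRM t f = ∑ p ∈ f.support, f p * t ^ p.1 * (1 - t) ^ p.2 := by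
  simp [evalRM, Finsupp.linearCombination_apply, Finsupp.sum, mul_assoc]

lemma exists_neg_of_evalRM (h : (ℕ × ℕ) →₀ ℝ) (h0 : h ≠ 0)
    (he : ∀ t, evalRM t h = 0) : ∃ p, h p < 0 := by
  by_contra! hc
  apply h0
  have h1 := he (1 / 2)
  rw [evalRM_eq, Finset.sum_eq_zero_iff_of_nonneg] at h1
  · ext p
    by_contra hp
    have h2 := h1 p (Finsupp.mem_support_iff.2 hp)
    norm_num at h2
    exact hp h2
  · intro p _
    have := hc p
    norm_num
    positivity

lemma step_RM (f h : (ℕ × ℕ) →₀ ℝ) (hf : IsReducedModel f) (h0 : h ≠ 0)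
    (hs : h.support ⊆ f.support) (he : ∀ t, evalRM t h = 0) :
    ∃ s : ℝ, 0 < s ∧ IsReducedModel (f + s • h) ∧ (f + s • h).support ⊂ f.support := by
  obtain ⟨q, hq⟩ := exists_neg_of_evalRM h h0 he
  have hz : ∀ p, f p = 0 → h p = 0 := by
    intro p hp
    by_contra hh
    exact (Finsupp.mem_support_iff.1 (hs (Finsupp.mem_support_iff.2 hh))) hp
  have hne : (h.support.filter (fun p => h p < 0)).Nonempty :=
    ⟨q, by simp [hq, hq.ne]⟩
  obtain ⟨r, hr, hmin⟩ := Finset.exists_min_image _ (fun p => f p / (- h p)) hne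
  have hr' : h r < 0 := by simpa using (Finset.mem_filter.1 hr).2
  have hfr : 0 < f r := lt_of_le_of_ne (hf.1 r) (fun hh => hr'.ne (hz r hh.symm))
  have hspos : 0 < f r / (- h r) := div_pos hfr (by linarith)
  refine ⟨f r / (- h r), hspos, ⟨?_, ?_, ?_⟩, ?_⟩
  · intro p
    simp only [Finsupp.add_apply, Finsupp.smul_apply, smul_eq_mul]
    rcases lt_or_ge (h p) 0 with hp | hp
    · have := hmin p (by simp [hp, hp.ne])
      rw [le_div_iff₀ (by linarith)] at this
      linarith
    · have := hf.1 p
      positivity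
  · simp [hf.2.1, hz _ hf.2.1]
  · intro t
    rw [← evalRM_eq, map_add, map_smul, he t, evalRM_eq, hf.2.2 t]
    simp
  · rw [Finset.ssubset_iff_of_subset]
    · refine ⟨r, Finsupp.mem_support_iff.2 hfr.ne', ?_⟩
      rw [Finsupp.notMem_support_iff]
      simp only [Finsupp.add_apply, Finsupp.smul_apply, smul_eq_mul]
      have := hr'.ne
      field_simp
      ring
    · intro p hp
      rw [Finsupp.mem_support_iff] at hp ⊢
      intro hh
      apply hp
      simp [hh, hz p hh]

lemma mem_hull_RM (n : ℕ) : ∀ f : (ℕ × ℕ) →₀ ℝ, IsReducedModel f → f.support.card = n →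
    f ∈ convexHull ℝ {g | IsFundamentalRM g ∧ g.support ⊆ f.support} := by
  induction n using Nat.strong_induction_on with
  | _ n ih =>
    intro f hf hn
    by_cases hfund : IsFundamentalRM f
    · exact subset_convexHull ℝ _ ⟨hfund, subset_rfl⟩
    · have : ∃ g : (ℕ × ℕ) →₀ ℝ, g.support ⊆ f.support ∧
          (∀ t : ℝ, ∑ p ∈ g.support, g p * t ^ p.1 * (1 - t) ^ p.2 = 1) ∧ g ≠ f := by
        by_contra! hc
        exact hfund ⟨hf, hc⟩
      obtain ⟨g, hg, hg1, hgf⟩ := this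
      have key : ∀ k : (ℕ × ℕ) →₀ ℝ, IsReducedModel k → k.support ⊂ f.support →
          k ∈ convexHull ℝ {g | IsFundamentalRM g ∧ g.support ⊆ f.support} := by
        intro k hk hks
        refine convexHull_mono ?_ (ih _ (hn ▸ Finset.card_lt_card hks) k hk rfl)
        rintro x ⟨hx, hx'⟩
        exact ⟨hx, hx'.trans hks.subset⟩
      have h0 : g - f ≠ 0 := sub_ne_zero.2 hgf
      have hs : (g - f).support ⊆ f.support :=
        Finsupp.support_sub.trans (Finset.union_subset hg subset_rfl)
      have he : ∀ t, evalRM t (g - f) = 0 := by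
        intro t
        rw [map_sub, evalRM_eq, evalRM_eq, hg1, hf.2.2, sub_self]
      obtain ⟨s, hs0, hs1, hs2⟩ := step_RM f (g - f) hf h0 hs he
      obtain ⟨u, hu0, hu1, hu2⟩ := step_RM f (-(g - f)) hf (neg_ne_zero.2 h0)
        (by rw [Finsupp.support_neg]; exact hs) (by intro t; rw [map_neg, he, neg_zero])
      have hc := (convex_convexHull ℝ {g | IsFundamentalRM g ∧ g.support ⊆ f.support})
        (key _ hs1 hs2) (key _ hu1 hu2)
        (a := u / (s + u)) (b := s / (s + u)) (by positivity) (by positivity)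
        (by field_simp; ring)
      convert hc using 1
      ext p
      simp only [Finsupp.add_apply, Finsupp.smul_apply, smul_eq_mul, Finsupp.neg_apply]
      field_simp
      ring

theorem stmt_18 (f : (ℕ × ℕ) →₀ ℝ) (hf : IsReducedModel f) :
    ∃ (m : ℕ) (F : Fin m → (ℕ × ℕ) →₀ ℝ) (μ : Fin m → ℝ),
      1 ≤ m ∧
      (∀ a : Fin m, IsFundamentalRM (F a)) ∧
      (∀ a : Fin m, (F a).support ⊆ f.support) ∧
      (∀ a : Fin m, 0 < μ a) ∧
      (∑ a : Fin m, μ a = 1) ∧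
      f = ∑ a : Fin m, μ a • F a := by
  obtain ⟨ι, _, z, w, hz, -, hw, hw1, hsum⟩ :=
    eq_pos_convex_span_of_mem_convexHull (mem_hull_RM _ f hf rfl)
  let e := (Fintype.equivFin ι).symm
  have hz' : ∀ i, IsFundamentalRM (z i) ∧ (z i).support ⊆ f.support :=
    fun i => hz ⟨i, rfl⟩
  have hsum1 : ∑ a, w (e a) = 1 := by rw [Equiv.sum_comp e w, hw1]
  refine ⟨Fintype.card ι, fun a => z (e a), fun a => w (e a), ?_, fun a => (hz' _).1,
    fun a => (hz' _).2, fun a => hw _, hsum1, ?_⟩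
  · rw [Nat.one_le_iff_ne_zero]
    intro h
    have := Fintype.card_eq_zero_iff.1 h
    simp at hw1
  · rw [Equiv.sum_comp e (fun i => w i • z i), hsum]
end

section
/- Let w be a fundamental chipsplitting outcome of degree d whose positive support supp⁺(w) has exactly n + 1 elements. Then n ≤ d. -/
/-- A nonzero valid outcome `w` is fundamental if it cannot be written as
`μ₁·w₁ + μ₂·w₂` (as functions into ℚ) for positive rationals `μ₁, μ₂` and valid
outcomes `w₁, w₂` whose positive supports are proper subsets of that of `w`. -/
def IsFundamentalOutcome (w : (ℕ × ℕ) →₀ ℤ) : Prop :=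
  IsOutcome w ∧ IsValid w ∧ w ≠ 0 ∧
    ¬ ∃ (μ₁ μ₂ : ℚ) (w₁ w₂ : (ℕ × ℕ) →₀ ℤ),
        0 < μ₁ ∧ 0 < μ₂ ∧
        IsOutcome w₁ ∧ IsValid w₁ ∧ IsOutcome w₂ ∧ IsValid w₂ ∧
        {p : ℕ × ℕ | 0 < w₁ p} ⊂ {p : ℕ × ℕ | 0 < w p} ∧
        {p : ℕ × ℕ | 0 < w₂ p} ⊂ {p : ℕ × ℕ | 0 < w p} ∧
        ∀ p : ℕ × ℕ, (w p : ℚ) = μ₁ * (w₁ p : ℚ) + μ₂ * (w₂ p : ℚ)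

/-- The weight `∑ w(i,j) 2^{-(i+j)}`. -/
noncomputable def halfWeight : ((ℕ × ℕ) →₀ ℤ) →+ ℚ :=
  Finsupp.liftAddHom fun p => (AddMonoidHom.mulRight ((1 / 2 : ℚ) ^ (p.1 + p.2))).comp
    (Int.castAddHom ℚ)

lemma halfWeight_single (p : ℕ × ℕ) (a : ℤ) :
    halfWeight (Finsupp.single p a) = (a : ℚ) * (1 / 2 : ℚ) ^ (p.1 + p.2) := by
  simp [halfWeight]

lemma halfWeight_apply (w : (ℕ × ℕ) →₀ ℤ) :
    halfWeight w = ∑ p ∈ w.support, (w p : ℚ) * (1 / 2 : ℚ) ^ (p.1 + p.2) := by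
  simp [halfWeight, Finsupp.liftAddHom_apply, Finsupp.sum]

lemma halfWeight_outcome (w : (ℕ × ℕ) →₀ ℤ) (h : IsOutcome w) : halfWeight w = 0 := by
  have : AddSubgroup.closure (Set.range splitMove) ≤ halfWeight.ker := by
    rw [AddSubgroup.closure_le]
    rintro _ ⟨p, rfl⟩
    change halfWeight _ = 0
    simp only [splitMove, map_add, map_sub, halfWeight_single]
    rw [show p.1 + 1 + p.2 = p.1 + p.2 + 1 by ring, ← add_assoc, pow_succ]
    push_cast
    ring
  exact this h

/-- A nonzero outcome has a negative entry. -/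
lemma exists_neg (v : (ℕ × ℕ) →₀ ℤ) (h : IsOutcome v) (h0 : v ≠ 0) : ∃ p, v p < 0 := by
  by_contra! hc
  have h1 := halfWeight_outcome v h
  rw [halfWeight_apply] at h1
  obtain ⟨p, hp⟩ := Finsupp.support_nonempty_iff.mpr h0
  have : 0 < ∑ p ∈ v.support, (v p : ℚ) * (1 / 2 : ℚ) ^ (p.1 + p.2) := by
    apply Finset.sum_pos _ ⟨p, hp⟩
    intro q hq
    have h2 : (0 : ℚ) < v q := by
      exact_mod_cast lt_of_le_of_ne (hc q) (Ne.symm (Finsupp.mem_support_iff.mp hq))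
    positivity
  linarith

/-- Moving from `w` in direction `v` until a positive entry vanishes. -/
lemma shrink (w v : (ℕ × ℕ) →₀ ℤ) (hw : IsOutcome w) (hwv : IsValid w) (hv : IsOutcome v)
    (h0 : v ≠ 0) (hs : ∀ p, v p ≠ 0 → 0 < w p) :
    ∃ a b : ℤ, 0 < a ∧ 0 < b ∧ IsOutcome (a • w + b • v) ∧ IsValid (a • w + b • v) ∧
      {p : ℕ × ℕ | 0 < (a • w + b • v) p} ⊂ {p : ℕ × ℕ | 0 < w p} := by
  obtain ⟨q, hq⟩ := exists_neg v hv h0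
  obtain ⟨p0, hp0, hmin⟩ := Finset.exists_min_image (v.support.filter (fun p => v p < 0))
    (fun p => (w p : ℚ) / (-(v p : ℚ))) ⟨q, by simp [hq, hq.ne]⟩
  simp only [Finset.mem_filter, Finsupp.mem_support_iff] at hp0 hmin
  have hwp := hs p0 hp0.1
  have key : ∀ p, v p ≠ 0 → 0 ≤ (-(v p0)) * w p + w p0 * v p := by
    intro p hp
    have hwpp := hs p hp
    rcases lt_or_gt_of_ne hp with hneg | hpos
    · have h1 := hmin p ⟨hp, hneg⟩
      have e1 : (0 : ℚ) < -(v p0 : ℚ) := by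
        have : (v p0 : ℚ) < 0 := by exact_mod_cast hp0.2
        linarith
      have e2 : (0 : ℚ) < -(v p : ℚ) := by
        have : (v p : ℚ) < 0 := by exact_mod_cast hneg
        linarith
      rw [div_le_div_iff₀ e1 e2] at h1
      have h2 : w p0 * -(v p) ≤ w p * -(v p0) := by exact_mod_cast h1
      linarith
    · have := mul_pos (neg_pos.mpr hp0.2) hwpp
      have := mul_pos hwp hpos
      linarith
  refine ⟨-(v p0), w p0, by linarith [hp0.2], hwp, ?_, ?_, ?_⟩
  · exact AddSubgroup.add_mem _ (AddSubgroup.zsmul_mem _ hw _) (AddSubgroup.zsmul_mem _ hv _)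
  · intro p hp
    simp only [Finsupp.add_apply, Finsupp.smul_apply, smul_eq_mul] at hp
    by_cases hvp : v p = 0
    · rw [hvp] at hp
      apply hwv
      by_contra! hc
      have := mul_nonneg (neg_pos.mpr hp0.2).le hc
      linarith
    · linarith [key p hvp]
  · rw [Set.ssubset_iff_of_subset]
    · refine ⟨p0, hwp, ?_⟩
      simp only [Set.mem_ofPred_eq, Finsupp.add_apply, Finsupp.smul_apply, smul_eq_mul]
      intro h
      linarith
    · intro p hp
      simp only [Set.mem_ofPred_eq, Finsupp.add_apply, Finsupp.smul_apply, smul_eq_mul] at hp ⊢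
      by_cases hvp : v p = 0
      · rw [hvp] at hp
        have : 0 < -(v p0) * w p := by linarith
        exact (pos_iff_pos_of_mul_pos this).mp (neg_pos.mpr hp0.2)
      · exact hs p hvp

/-- The submodule of outcomes. -/
noncomputable def outcomeModule : Submodule ℤ ((ℕ × ℕ) →₀ ℤ) :=
  AddSubgroup.toIntSubmodule (AddSubgroup.closure (Set.range splitMove))

/-- The class of `δ_p` modulo outcomes. -/
noncomputable def chipClass (p : ℕ × ℕ) : ((ℕ × ℕ) →₀ ℤ) ⧸ outcomeModule :=
  outcomeModule.mkQ (Finsupp.single p 1)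

lemma chipClass_rel (i j : ℕ) :
    chipClass (i, j + 1) = chipClass (i, j) - chipClass (i + 1, j) := by
  have h : outcomeModule.mkQ (splitMove (i, j)) = 0 := by
    rw [← LinearMap.mem_ker, Submodule.ker_mkQ]
    exact AddSubgroup.subset_closure ⟨_, rfl⟩
  simp only [splitMove, map_add, map_sub] at h
  change chipClass (i + 1, j) + chipClass (i, j + 1) - chipClass (i, j) = 0 at h
  rw [eq_sub_iff_add_eq, add_comm]
  exact sub_eq_zero.mp h

open Classical in
lemma chipClass_mem (d j : ℕ) : ∀ i, i + j ≤ d → chipClass (i, j) ∈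
    Submodule.span ℤ (((Finset.range (d + 1)).image (fun k => outcomeModule.mkQ
      (Finsupp.single (k, 0) 1)) : Finset _) : Set (((ℕ × ℕ) →₀ ℤ) ⧸ outcomeModule)) := by
  induction j with
  | zero =>
    intro i hi
    apply Submodule.subset_span
    rw [Finset.mem_coe, Finset.mem_image]
    exact ⟨i, by simp; omega, rfl⟩
  | succ j ih =>
    intro i hi
    rw [chipClass_rel]
    exact Submodule.sub_mem _ (ih i (by omega)) (ih (i + 1) (by omega))

open Classical in
lemma exists_relation (T : Set (ℕ × ℕ)) (hT : T.Finite) (d : ℕ)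
    (hd : ∀ p ∈ T, p.1 + p.2 ≤ d) (hc : d + 1 < T.ncard) :
    ∃ v : (ℕ × ℕ) →₀ ℤ, IsOutcome v ∧ v ≠ 0 ∧ ∀ p, v p ≠ 0 → p ∈ T := by
  have hdep : ¬ LinearIndepOn ℤ chipClass T := by
    intro hli
    have : Fintype T := hT.fintype
    have h1 := linearIndependent_le_span' _ hli
      (((Finset.range (d + 1)).image (fun k => outcomeModule.mkQ
      (Finsupp.single (k, 0) 1)) : Finset _) : Set (((ℕ × ℕ) →₀ ℤ) ⧸ outcomeModule)) (by
        rintro _ ⟨p, rfl⟩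
        exact chipClass_mem d p.1.2 p.1.1 (hd _ p.2))
    have h2 : ((Finset.range (d + 1)).image (fun k => outcomeModule.mkQ
      (Finsupp.single (k, 0) 1))).card ≤ d + 1 := Finset.card_image_le.trans (by simp)
    rw [Set.ncard_eq_toFinset_card', Set.toFinset_card] at hc
    rw [Cardinal.mk_fintype, Nat.cast_le] at h1
    have h3 := (h1.trans_eq (Fintype.card_coe _)).trans h2
    omega
  rw [linearDepOn_iff] at hdep
  obtain ⟨f, hf, hsum, h0⟩ := hdep
  refine ⟨f, ?_, h0, fun p hp => hf (Finsupp.mem_support_iff.mpr hp)⟩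
  have : outcomeModule.mkQ f = 0 := by
    rw [← hsum]
    conv_lhs => rw [← Finsupp.sum_single f]
    rw [Finsupp.sum, map_sum]
    refine Finset.sum_congr rfl fun p _ => ?_
    rw [chipClass, ← map_smul, Finsupp.smul_single, smul_eq_mul, mul_one]
  rw [← LinearMap.mem_ker, Submodule.ker_mkQ] at this
  exact this

theorem stmt_19 (w : (ℕ × ℕ) →₀ ℤ) (d n : ℕ)
    (hfund : IsFundamentalOutcome w)
    (hdegle : ∀ p : ℕ × ℕ, w p ≠ 0 → p.1 + p.2 ≤ d)
    (hdegeq : ∃ p : ℕ × ℕ, w p ≠ 0 ∧ p.1 + p.2 = d)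
    (hcard : {p : ℕ × ℕ | 0 < w p}.ncard = n + 1) :
    n ≤ d := by
  by_contra! hn
  obtain ⟨hw, hval, -, hno⟩ := hfund
  obtain ⟨v, hv, hv0, hvs⟩ := exists_relation {p : ℕ × ℕ | 0 < w p}
    (Set.finite_of_ncard_pos (by omega)) d (fun p hp => hdegle p (ne_of_gt hp)) (by omega)
  obtain ⟨a, b, ha, hb, ho1, hv1, hs1⟩ := shrink w v hw hval hv hv0 hvs
  obtain ⟨a', b', ha', hb', ho2, hv2, hs2⟩ := shrink w (-v) hw hval
    (AddSubgroup.neg_mem _ hv) (neg_ne_zero.mpr hv0) (fun p hp => hvs p (by simpa using hp))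
  apply hno
  have ha0 : (0 : ℚ) < a := by exact_mod_cast ha
  have hb0 : (0 : ℚ) < b := by exact_mod_cast hb
  have ha0' : (0 : ℚ) < a' := by exact_mod_cast ha'
  have hb0' : (0 : ℚ) < b' := by exact_mod_cast hb'
  refine ⟨b' / (b' * a + b * a'), b / (b' * a + b * a'), _, _, by positivity, by positivity,
    ho1, hv1, ho2, hv2, hs1, hs2, fun p => ?_⟩
  simp only [Finsupp.add_apply, Finsupp.smul_apply, smul_eq_mul, Finsupp.neg_apply]
  push_cast
  field_simp
  ring
end
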